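/- arXiv:2208.00917 — 4 statements merged into one kernel-verified Lean document; each statement's English description precedes it below -/
import Mathlib

section
/- Let n be a positive odd integer. Then Z_{n,t}(π/2) = 0 for every t ≥ 0, and there exist continuous functions x_1, …, x_{(n−1)/2} : [0,∞) → ℝ with x_k(0) = π/2 for each k, such that for every t > 0 one has 0 < x_1(t) < … < x_{(n−1)/2}(t) < π/2 and {x ∈ (0,π/2) : Z_{n,t}(x) = 0} = {x_1(t), …, x_{(n−1)/2}(t)}; moreover, each x_k is strictly decreasing on [0,∞), and lim_{t→∞} x_k(t) = (2k−1)π/(2n). -/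
open scoped Real

noncomputable def spin (b : Bool) : ℝ := if b then 1 else -1

/-- The Curie-Weiss partition function `Z_{n,t}(x)`. -/
noncomputable def CWZ (n : ℕ) (t x : ℂ) : ℂ :=
  ∑ σ : Fin n → Bool, Complex.exp
    (t * ((∑ j, spin (σ j) : ℝ) : ℂ) ^ 2
      + Complex.I * x * ((∑ j, spin (σ j) : ℝ) : ℂ))

/-- The coefficient form of the Curie-Weiss partition function at real arguments. -/
noncomputable def cwReal (n : ℕ) (t x : ℝ) : ℝ :=
  ∑ k ∈ Finset.range (n + 1),
    (n.choose k : ℝ) * (Real.exp (t * (2 * k - n) ^ 2) * Real.cos ((2 * k - n) * x))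

lemma sum_range_choose_succ_mul {R : Type*} [CommSemiring R] (n : ℕ) (f : ℕ → R) :
    ∑ k ∈ Finset.range (n + 2), ((n + 1).choose k : R) * f k
      = ∑ k ∈ Finset.range (n + 1), (n.choose k : R) * (f k + f (k + 1)) := by
  rw [Finset.sum_range_succ']
  simp only [Nat.choose_succ_succ, Nat.cast_add, add_mul, Finset.sum_add_distrib, mul_add]
  have h : ∑ k ∈ Finset.range (n + 1), (n.choose (k + 1) : R) * f (k + 1) + f 0
      = ∑ k ∈ Finset.range (n + 1), (n.choose k : R) * f k := by
    have h1 := Finset.sum_range_succ' (fun k => (n.choose k : R) * f k) (n + 1)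
    rw [Finset.sum_range_succ] at h1
    simpa using h1.symm
  rw [← h]
  simp
  ring

lemma sum_spin_eq_sum_choose (n : ℕ) (g : ℝ → ℂ) :
    ∑ σ : Fin n → Bool, g (∑ j, spin (σ j))
      = ∑ k ∈ Finset.range (n + 1), (n.choose k : ℂ) * g (2 * k - n) := by
  induction n generalizing g with
  | zero => simp
  | succ n ih =>
    rw [sum_range_choose_succ_mul n (fun k : ℕ => g (2 * k - (n + 1 : ℕ)))]
    have h := ih (fun y => g (-1 + y) + g (1 + y))
    rw [← Equiv.sum_comp (Fin.consEquiv fun _ : Fin (n + 1) => Bool), Fintype.sum_prod_type]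
    simp only [Fin.consEquiv_apply, Fin.sum_univ_succ, Fin.cons_zero, Fin.cons_succ,
      Fintype.sum_bool]
    rw [add_comm, ← Finset.sum_add_distrib]
    simp only [spin, if_true, Bool.false_eq_true, if_false] at h ⊢
    rw [h]
    refine Finset.sum_congr rfl fun k _ => ?_
    push_cast
    ring_nf

lemma sum_choose_reflect (n : ℕ) (f : ℝ → ℝ) :
    ∑ k ∈ Finset.range (n + 1), (n.choose k : ℝ) * f (2 * k - n)
      = ∑ k ∈ Finset.range (n + 1), (n.choose k : ℝ) * f (-(2 * k - n)) := by
  rw [← Finset.sum_range_reflect]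
  refine Finset.sum_congr rfl fun k hk => ?_
  have hk' : k ≤ n := by simpa [Nat.lt_succ_iff] using hk
  simp only [Nat.add_sub_cancel, Nat.choose_symm hk', Nat.cast_sub hk']
  ring_nf

lemma cwReal_eq_sum_exp (n : ℕ) (t x : ℝ) :
    (cwReal n t x : ℂ) = ∑ k ∈ Finset.range (n + 1), (n.choose k : ℂ) *
      Complex.exp (t * ((2 * k - n : ℝ) : ℂ) ^ 2 + Complex.I * x * ((2 * k - n : ℝ) : ℂ)) := by
  have key (y : ℝ) : Complex.exp (t * (y : ℂ) ^ 2 + Complex.I * x * (y : ℂ))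
      = ((Real.exp (t * y ^ 2) * Real.cos (y * x) : ℝ) : ℂ)
        + ((Real.exp (t * y ^ 2) * Real.sin (y * x) : ℝ) : ℂ) * Complex.I := by
    push_cast
    rw [Complex.exp_add, show Complex.I * x * (y : ℂ) = (y * x : ℂ) * Complex.I by ring,
      Complex.exp_mul_I]
    ring
  have h := sum_choose_reflect n (fun y => Real.exp (t * y ^ 2) * Real.sin (y * x))
  simp only [neg_sq, neg_mul, Real.sin_neg, mul_neg, Finset.sum_neg_distrib] at h
  have h0 := congrArg (fun r : ℝ => (r : ℂ) * Complex.I) (self_eq_neg.1 h)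
  simp only [Complex.ofReal_zero, zero_mul, Complex.ofReal_sum, Finset.sum_mul] at h0
  simp only [key, mul_add, Finset.sum_add_distrib]
  rw [← add_zero (cwReal n t x : ℂ), ← h0, cwReal, Complex.ofReal_sum]
  congr 1 <;> refine Finset.sum_congr rfl fun k _ => ?_
  · push_cast
    ring
  · push_cast
    ring

lemma CWZ_eq_cwReal (n : ℕ) (t x : ℝ) : CWZ n t x = (cwReal n t x : ℂ) := by
  rw [cwReal_eq_sum_exp]
  exact sum_spin_eq_sum_choose n
    (fun y : ℝ => Complex.exp (t * (y : ℂ) ^ 2 + Complex.I * x * (y : ℂ)))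

lemma cwReal_neg (n : ℕ) (t x : ℝ) : cwReal n t (-x) = cwReal n t x := by
  simp [cwReal]

lemma cwReal_zero_pos (n : ℕ) (t : ℝ) : 0 < cwReal n t 0 := by
  unfold cwReal
  refine Finset.sum_pos (fun k hk => ?_) ⟨0, by simp⟩
  have : 0 < n.choose k := Nat.choose_pos (by simpa [Nat.lt_succ_iff] using hk)
  simp only [mul_zero, Real.cos_zero, mul_one]
  positivity

lemma cwReal_odd (m : ℕ) (t x : ℝ) :
    cwReal (2 * m + 1) t x = ∑ i ∈ Finset.range (m + 1),
      2 * ((2 * m + 1).choose (m + 1 + i) : ℝ) * Real.exp (t * (2 * i + 1) ^ 2)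
        * Real.cos ((2 * i + 1) * x) := by
  unfold cwReal
  rw [show 2 * m + 1 + 1 = (m + 1) + (m + 1) by ring, Finset.sum_range_add,
    ← Finset.sum_range_reflect, ← Finset.sum_add_distrib]
  refine Finset.sum_congr rfl fun i hi => ?_
  have hi' : i ≤ m := by simpa [Nat.lt_succ_iff] using hi
  have h : (2 * m + 1).choose (m - i) = (2 * m + 1).choose (m + 1 + i) := by
    rw [← Nat.choose_symm_of_eq_add]; omega
  rw [Nat.add_sub_cancel, h, Nat.cast_sub hi']
  have e1 : (2 * ((m : ℝ) - i) - ((2 * m + 1 : ℕ) : ℝ)) = -(2 * i + 1) := by push_cast; ring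
  have e2 : (2 * ((m + 1 + i : ℕ) : ℝ) - ((2 * m + 1 : ℕ) : ℝ)) = 2 * i + 1 := by
    push_cast; ring
  rw [e1, e2, neg_sq, neg_mul, Real.cos_neg]
  ring

/-- A product of factors `1 - v exp (-2 i x)` with `‖v‖ < 1` has a continuous periodic phase. -/
lemma exists_phase (M : Multiset ℂ) (hM : ∀ v ∈ M, ‖v‖ < 1) :
    ∃ ψ : ℝ → ℝ, Continuous ψ ∧ (∀ x, ψ (x + π) = ψ x) ∧ ∃ ρ : ℝ → ℝ, (∀ x, 0 < ρ x) ∧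
      ∀ x : ℝ, (M.map fun v => 1 - v * Complex.exp (-2 * Complex.I * x)).prod
        = ρ x * Complex.exp (ψ x * Complex.I) := by
  induction M using Multiset.induction with
  | empty => exact ⟨0, continuous_zero, by simp, 1, by simp, by simp⟩
  | cons v M ih =>
    obtain ⟨ψ, hc, hp, ρ, hρ, h⟩ := ih fun u hu => hM u (Multiset.mem_cons_of_mem hu)
    have hv : ‖v‖ < 1 := hM v (Multiset.mem_cons_self v M)
    set q : ℝ → ℂ := fun x => 1 - v * Complex.exp (-2 * Complex.I * x) with hq
    have hn (x : ℝ) : ‖v * Complex.exp (-2 * Complex.I * x)‖ < 1 := by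
      rw [norm_mul, Complex.norm_exp]
      simpa using hv
    have hre (x : ℝ) : 0 < (q x).re := by
      have := (Complex.re_le_norm (v * Complex.exp (-2 * Complex.I * x))).trans_lt (hn x)
      simp only [hq, Complex.sub_re, Complex.one_re]
      linarith
    have hqp (x : ℝ) : q (x + π) = q x := by
      simp only [hq, Complex.ofReal_add, mul_add, Complex.exp_add]
      rw [show -2 * Complex.I * (π : ℂ) = -(2 * π * Complex.I) by ring, Complex.exp_neg,
        Complex.exp_two_pi_mul_I]
      simp
    have hqc : Continuous q := by fun_prop
    refine ⟨fun x => Complex.arg (q x) + ψ x, ?_, fun x => by simp only [hqp, hp],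
      fun x => ‖q x‖ * ρ x, fun x => ?_, fun x => ?_⟩
    · refine Continuous.add (continuous_iff_continuousAt.2 fun x => ?_) hc
      exact (Complex.continuousAt_arg (Or.inl (hre x))).comp hqc.continuousAt
    · refine mul_pos (norm_pos_iff.2 fun h0 => ?_) (hρ x)
      have := hre x
      simp [h0] at this
    · rw [Multiset.map_cons, Multiset.prod_cons, h x]
      have := Complex.norm_mul_exp_arg_mul_I (q x)
      change q x * _ = _
      conv_lhs => rw [← this]
      push_cast
      rw [add_mul, Complex.exp_add]
      ring

/-- A continuous phase gaining `N π` over a half-open interval of length `π` meets the zeros of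
the cosine at `N` distinct points. -/
lemma exists_finset_cos_eq_zero (N : ℕ) (θ : ℝ → ℝ) (a : ℝ) (hc : Continuous θ)
    (hθ : θ (a + π) = θ a + N * π) :
    ∃ S : Finset ℝ, S.card = N ∧ ∀ x ∈ S, x ∈ Set.Ico a (a + π) ∧ Real.cos (θ x) = 0 := by
  set c : ℤ := ⌈θ a / π - 1 / 2⌉ with hcdef
  have hpi := Real.pi_pos
  have h1 : θ a ≤ (c + 1 / 2) * π := by
    have := Int.le_ceil (θ a / π - 1 / 2)
    rw [← div_le_iff₀ hpi]
    linarith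
  have h2 : (c + 1 / 2) * π < θ a + π := by
    have := Int.ceil_lt_add_one (θ a / π - 1 / 2)
    rw [← hcdef] at this
    have h : (c : ℝ) + 1 / 2 < θ a / π + 1 := by linarith
    calc _ < (θ a / π + 1) * π := by gcongr
      _ = _ := by field_simp
  have hex (j : Fin N) : ∃ x ∈ Set.Ico a (a + π), θ x = (c + 1 / 2) * π + j * π := by
    have hj : (j : ℝ) + 1 ≤ N := by exact_mod_cast j.2
    have hj0 : (0 : ℝ) ≤ j := by positivity
    have hlt : (c + 1 / 2) * π + j * π < θ (a + π) := by
      rw [hθ]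
      nlinarith
    obtain ⟨x, hx, hxe⟩ := intermediate_value_Icc (by linarith : a ≤ a + π) hc.continuousOn
      (show (c + 1 / 2) * π + j * π ∈ Set.Icc (θ a) (θ (a + π)) from
        ⟨by nlinarith, hlt.le⟩)
    refine ⟨x, ⟨hx.1, lt_of_le_of_ne hx.2 ?_⟩, hxe⟩
    rintro rfl
    exact hlt.ne hxe.symm
  choose x hx hxθ using hex
  have hinj : Function.Injective x := fun i j hij => by
    have h := hxθ i
    rw [hij, hxθ j] at h
    have : (j : ℝ) = i := by
      have := add_left_cancel h
      exact mul_right_cancel₀ hpi.ne' this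
    exact Fin.ext (by exact_mod_cast this.symm)
  refine ⟨Finset.univ.image x, by simp [Finset.card_image_of_injective _ hinj], ?_⟩
  intro y hy
  obtain ⟨j, -, rfl⟩ := Finset.mem_image.1 hy
  refine ⟨hx j, ?_⟩
  rw [hxθ j, Real.cos_eq_zero_iff]
  exact ⟨c + j, by push_cast; ring⟩

/-- The polynomial whose values on the unit circle are those of the partition function. -/
noncomputable def cwPoly (n : ℕ) (t : ℝ) : Polynomial ℂ :=
  ∑ k ∈ Finset.range (n + 1),
    Polynomial.monomial k (((n.choose k : ℝ) * Real.exp (t * (2 * k - n) ^ 2) : ℝ) : ℂ)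

lemma cwPoly_coeff (n : ℕ) (t : ℝ) (j : ℕ) :
    (cwPoly n t).coeff j = (((n.choose j : ℝ) * Real.exp (t * (2 * j - n) ^ 2) : ℝ) : ℂ) := by
  simp only [cwPoly, Polynomial.finsetSum_coeff, Polynomial.coeff_monomial, Finset.sum_ite_eq',
    Finset.mem_range]
  split_ifs with h
  · rfl
  · rw [Nat.choose_eq_zero_of_lt (by omega)]
    simp

lemma cwPoly_natDegree (n : ℕ) (t : ℝ) : (cwPoly n t).natDegree = n := by
  refine Polynomial.natDegree_eq_of_le_of_coeff_ne_zero ?_ ?_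
  · refine Polynomial.natDegree_le_iff_coeff_eq_zero.2 fun j hj => ?_
    rw [cwPoly_coeff, Nat.choose_eq_zero_of_lt hj]
    simp
  · rw [cwPoly_coeff, Complex.ofReal_ne_zero]
    simp

lemma cwPoly_leadingCoeff (n : ℕ) (t : ℝ) :
    (cwPoly n t).leadingCoeff = ((Real.exp (t * n ^ 2) : ℝ) : ℂ) := by
  rw [Polynomial.leadingCoeff, cwPoly_natDegree, cwPoly_coeff, Nat.choose_self]
  ring_nf

lemma cwPoly_ne_zero (n : ℕ) (t : ℝ) : cwPoly n t ≠ 0 := by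
  rw [← Polynomial.leadingCoeff_ne_zero, cwPoly_leadingCoeff, Complex.ofReal_ne_zero]
  exact (Real.exp_pos _).ne'

lemma cwPoly_eval (n : ℕ) (t : ℝ) (w : ℂ) :
    (cwPoly n t).eval w = ∑ k ∈ Finset.range (n + 1),
      (n.choose k : ℂ) * Complex.exp (t * (2 * k - n) ^ 2) * w ^ k := by
  simp [cwPoly, Polynomial.eval_finsetSum]

lemma cwPoly_eval_exp (n : ℕ) (t x : ℝ) :
    (cwPoly n t).eval (Complex.exp (2 * Complex.I * x))
      = Complex.exp (Complex.I * n * x) * cwReal n t x := by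
  rw [cwReal_eq_sum_exp, cwPoly_eval, Finset.mul_sum]
  refine Finset.sum_congr rfl fun k _ => ?_
  rw [← Complex.exp_nat_mul, mul_assoc (n.choose k : ℂ), ← Complex.exp_add,
    mul_left_comm (Complex.exp _), ← Complex.exp_add]
  push_cast
  congr 2
  ring

lemma cwReal_succ (n : ℕ) (t x : ℝ) :
    cwReal (n + 1) t x = 2 * Real.exp t * (Complex.exp (Complex.I * (1 - n) * x - 2 * t * n)
      * (cwPoly n t).eval (Complex.exp (4 * t + 2 * Complex.I * x))).re := by
  have h1 : cwReal (n + 1) t x = 2 * ∑ k ∈ Finset.range (n + 1), (n.choose k : ℝ) *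
      (Real.exp (t * ((2 * k - n) + 1) ^ 2) * Real.cos (((2 * k - n) + 1) * x)) := by
    rw [cwReal, sum_range_choose_succ_mul n fun k : ℕ =>
      Real.exp (t * (2 * k - (n + 1 : ℕ)) ^ 2) * Real.cos ((2 * k - (n + 1 : ℕ)) * x), two_mul]
    nth_rw 1 [sum_choose_reflect n fun y => Real.exp (t * (y + 1) ^ 2) * Real.cos ((y + 1) * x)]
    rw [← Finset.sum_add_distrib]
    refine Finset.sum_congr rfl fun k _ => ?_
    rw [mul_add]
    congr 2
    · rw [← Real.cos_neg]
      push_cast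
      ring_nf
    · push_cast
      ring_nf
  rw [h1, cwPoly_eval, mul_assoc]
  congr 1
  rw [Finset.mul_sum, Complex.re_sum, Finset.mul_sum]
  refine Finset.sum_congr rfl fun k _ => ?_
  have h2 : Complex.exp (Complex.I * (1 - n) * x - 2 * t * n) * ((n.choose k : ℂ)
        * Complex.exp (t * (2 * k - n) ^ 2) * Complex.exp (4 * t + 2 * Complex.I * x) ^ k)
      = ((n.choose k * Real.exp (t * ((2 * k - n) ^ 2 + 2 * (2 * k - n))) : ℝ) : ℂ)
        * Complex.exp (((2 * k - n + 1) * x : ℝ) * Complex.I) := by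
    push_cast
    have e : Complex.exp (Complex.I * (1 - n) * x - 2 * t * n) * Complex.exp (t * (2 * k - n) ^ 2)
          * Complex.exp (4 * t + 2 * Complex.I * x) ^ k
        = Complex.exp (t * ((2 * k - n) ^ 2 + 2 * (2 * k - n)))
          * Complex.exp ((2 * k - n + 1) * x * Complex.I) := by
      rw [← Complex.exp_nat_mul, ← Complex.exp_add, ← Complex.exp_add, ← Complex.exp_add]
      ring_nf
    linear_combination (n.choose k : ℂ) * e
  have h3 : Real.exp (t * ((2 * k - n) + 1) ^ 2)
      = Real.exp t * Real.exp (t * ((2 * k - n) ^ 2 + 2 * (2 * k - n))) := by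
    rw [← Real.exp_add]
    ring_nf
  rw [h2, Complex.re_ofReal_mul, Complex.exp_ofReal_mul_I_re, h3]
  ring

/-- If all roots of the polynomial of size `n` lie on the unit circle, then the partition function
of size `n + 1` has `n + 1` distinct real zeros in a period. -/
lemma exists_zeros_succ (n : ℕ) (t : ℝ) (ht : 0 < t)
    (H : ∀ w ∈ (cwPoly n t).roots, ‖w‖ = 1) :
    ∃ S : Finset ℝ, S.card = n + 1 ∧
      ∀ x ∈ S, x ∈ Set.Ico (-(π / 2)) (π / 2) ∧ cwReal (n + 1) t x = 0 := by
  obtain ⟨ψ, hψc, hψp, ρ, hρ, hψ⟩ :=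
    exists_phase ((cwPoly n t).roots.map fun r => r * Complex.exp (-4 * t)) (by
      intro v hv
      obtain ⟨r, hr, rfl⟩ := Multiset.mem_map.1 hv
      rw [norm_mul, H r hr, Complex.norm_exp]
      simpa using ht)
  have hsp := IsAlgClosed.splits (cwPoly n t)
  have hcard : (cwPoly n t).roots.card = n := by
    rw [← hsp.natDegree_eq_card_roots, cwPoly_natDegree]
  have heval (x : ℝ) : (cwPoly n t).eval (Complex.exp (4 * t + 2 * Complex.I * x))
      = Real.exp (t * n ^ 2) * (Complex.exp (4 * t + 2 * Complex.I * x) ^ n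
        * (ρ x * Complex.exp (ψ x * Complex.I))) := by
    rw [hsp.eval_eq_prod_roots, cwPoly_leadingCoeff, ← hψ x, Multiset.map_map]
    congr 1
    nth_rw 2 [← hcard]
    rw [← Multiset.prod_replicate, ← Multiset.map_const', ← Multiset.prod_map_mul]
    congr 1
    refine Multiset.map_congr rfl fun r _ => ?_
    have e : Complex.exp (4 * t + 2 * Complex.I * x) * (Complex.exp (-4 * t)
        * Complex.exp (-2 * Complex.I * x)) = 1 := by
      rw [← Complex.exp_add, ← Complex.exp_add, ← Complex.exp_zero]
      ring_nf
    simp only [Function.comp_apply]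
    linear_combination r * e
  have hzero (x : ℝ) (hx : Real.cos ((n + 1) * x + ψ x) = 0) : cwReal (n + 1) t x = 0 := by
    rw [cwReal_succ, heval]
    have : Complex.exp (Complex.I * (1 - n) * x - 2 * t * n) * (Real.exp (t * n ^ 2)
          * (Complex.exp (4 * t + 2 * Complex.I * x) ^ n * (ρ x * Complex.exp (ψ x * Complex.I))))
        = ((Real.exp (t * n ^ 2) * ρ x * Real.exp (2 * t * n) : ℝ) : ℂ)
          * Complex.exp (((n + 1) * x + ψ x : ℝ) * Complex.I) := by
      push_cast
      rw [← Complex.exp_nat_mul]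
      have e : Complex.exp (Complex.I * (1 - n) * x - 2 * t * n)
            * Complex.exp (n * (4 * t + 2 * Complex.I * x)) * Complex.exp (ψ x * Complex.I)
          = Complex.exp (2 * t * n) * Complex.exp (((n + 1) * x + ψ x) * Complex.I) := by
        rw [← Complex.exp_add, ← Complex.exp_add, ← Complex.exp_add]
        ring_nf
      linear_combination Complex.exp (t * n ^ 2) * ρ x * e
    rw [this, Complex.re_ofReal_mul, Complex.exp_ofReal_mul_I_re, hx]
    simp
  obtain ⟨S, hS, hS'⟩ := exists_finset_cos_eq_zero (n + 1) (fun x => (n + 1) * x + ψ x)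
    (-(π / 2)) (by fun_prop) (by rw [hψp]; push_cast; ring)
  refine ⟨S, hS, fun x hx => ⟨?_, hzero x (hS' x hx).2⟩⟩
  convert (hS' x hx).1 using 2
  ring

lemma exp_two_I_injOn :
    Set.InjOn (fun x : ℝ => Complex.exp (2 * Complex.I * x)) (Set.Ico (-(π / 2)) (π / 2)) := by
  intro x hx y hy hxy
  obtain ⟨k, hk⟩ := Complex.exp_eq_exp_iff_exists_int.1 hxy
  have h : x = y + k * π := by
    have h2 : (2 * Complex.I) * (x : ℂ) = (2 * Complex.I) * ((y + k * π : ℝ) : ℂ) := by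
      push_cast
      linear_combination hk
    exact_mod_cast mul_left_cancel₀ (by simp) h2
  have hpi := Real.pi_pos
  have h1 : (k : ℝ) * π < 1 * π := by linarith [hx.2, hy.1]
  have h2 : (-1 : ℝ) * π < k * π := by linarith [hx.1, hy.2]
  have h3 : k < 1 := by exact_mod_cast lt_of_mul_lt_mul_right h1 hpi.le
  have h4 : -1 < k := by exact_mod_cast lt_of_mul_lt_mul_right h2 hpi.le
  have : k = 0 := by omega
  simpa [this] using h

/-- All roots of `cwPoly` lie on the unit circle. -/
lemma norm_eq_one_of_mem_roots (n : ℕ) (t : ℝ) (ht : 0 < t) :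
    ∀ w ∈ (cwPoly n t).roots, ‖w‖ = 1 := by
  induction n with
  | zero =>
    intro w hw
    have := (Polynomial.card_roots' (cwPoly 0 t)).trans_eq (cwPoly_natDegree 0 t)
    rw [Multiset.card_eq_zero.1 (Nat.le_zero.1 this)] at hw
    simp at hw
  | succ n ih =>
    obtain ⟨S, hS, hS'⟩ := exists_zeros_succ n t ht ih
    set T : Finset ℂ := S.image fun x : ℝ => Complex.exp (2 * Complex.I * x) with hT
    have hTcard : T.card = n + 1 := by
      rw [hT, Finset.card_image_of_injOn, hS]
      exact exp_two_I_injOn.mono fun x hx => (hS' x hx).1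
    have hsub : T.val ≤ (cwPoly (n + 1) t).roots := by
      rw [Multiset.le_iff_subset T.nodup]
      intro w hw
      obtain ⟨x, hx, rfl⟩ := Finset.mem_image.1 (Finset.mem_def.2 hw)
      rw [Polynomial.mem_roots (cwPoly_ne_zero _ _), Polynomial.IsRoot, cwPoly_eval_exp,
        (hS' x hx).2]
      simp
    have heq : T.val = (cwPoly (n + 1) t).roots := by
      refine Multiset.eq_of_le_of_card_le hsub ?_
      rw [Finset.card_val, hTcard]
      exact (Polynomial.card_roots' _).trans_eq (cwPoly_natDegree _ _)
    intro w hw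
    rw [← heq, Finset.mem_val] at hw
    obtain ⟨x, -, rfl⟩ := Finset.mem_image.1 hw
    rw [Complex.norm_exp]
    simp

/-- The partition function of odd size `2 m + 1` has `m` zeros in `(0, π / 2)`. -/
lemma exists_zeros_Ioo (m : ℕ) (t : ℝ) (ht : 0 < t) :
    ∃ x : Fin m → ℝ, StrictMono x ∧
      ∀ k, x k ∈ Set.Ioo 0 (π / 2) ∧ cwReal (2 * m + 1) t (x k) = 0 := by
  obtain ⟨S, hS, hS'⟩ := exists_zeros_succ (2 * m) t ht (norm_eq_one_of_mem_roots _ t ht)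
  set A : Finset ℝ := (S.filter (-(π / 2) < ·)).image abs with hA
  have hAmem : ∀ x ∈ A, x ∈ Set.Ioo 0 (π / 2) ∧ cwReal (2 * m + 1) t x = 0 := by
    intro x hx
    obtain ⟨y, hy, rfl⟩ := Finset.mem_image.1 hx
    obtain ⟨hyS, hy2⟩ := Finset.mem_filter.1 hy
    obtain ⟨hy1, hy0⟩ := hS' y hyS
    refine ⟨⟨abs_pos.2 ?_, abs_lt.2 ⟨hy2, hy1.2⟩⟩, ?_⟩
    · rintro rfl
      exact (cwReal_zero_pos _ t).ne' hy0
    · rcases abs_choice y with h | h <;> rw [h]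
      · exact hy0
      · rw [cwReal_neg, hy0]
  have hsub : S ⊆ {-(π / 2)} ∪ (A ∪ A.image Neg.neg) := by
    intro y hy
    simp only [Finset.mem_union, Finset.mem_singleton]
    rcases (hS' y hy).1.1.eq_or_lt with h | h
    · exact Or.inl h.symm
    · have hmem : |y| ∈ A := Finset.mem_image_of_mem _ (Finset.mem_filter.2 ⟨hy, h⟩)
      rcases abs_choice y with h' | h'
      · exact Or.inr (Or.inl (h' ▸ hmem))
      · exact Or.inr (Or.inr (Finset.mem_image.2 ⟨|y|, hmem, by rw [h', neg_neg]⟩))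
  have hcard : m ≤ A.card := by
    have h1 := Finset.card_le_card hsub
    have h2 := Finset.card_union_le {-(π / 2)} (A ∪ A.image Neg.neg)
    have h3 := Finset.card_union_le A (A.image Neg.neg)
    have h4 := Finset.card_image_le (s := A) (f := Neg.neg)
    rw [Finset.card_singleton] at h2
    omega
  obtain ⟨B, hBA, hB⟩ := Finset.exists_subset_card_eq hcard
  exact ⟨B.orderEmbOfFin hB, (B.orderEmbOfFin hB).strictMono,
    fun k => hAmem _ (hBA (B.orderEmbOfFin_mem hB k))⟩

/-- Chebyshev polynomials of the third kind. -/
noncomputable def chebyshevV : ℕ → Polynomial ℝ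
  | 0 => 1
  | 1 => 2 * Polynomial.X - 1
  | n + 2 => 2 * Polynomial.X * chebyshevV (n + 1) - chebyshevV n

lemma cos_mul_chebyshevV_eval (n : ℕ) (x : ℝ) :
    Real.cos x * (chebyshevV n).eval (Real.cos (2 * x)) = Real.cos ((2 * n + 1) * x) := by
  induction n using Nat.twoStepInduction with
  | zero => simp [chebyshevV]
  | one =>
    simp only [chebyshevV, Polynomial.eval_sub, Polynomial.eval_mul, Polynomial.eval_ofNat,
      Polynomial.eval_X, Polynomial.eval_one]
    rw [show (2 * ((1 : ℕ) : ℝ) + 1) * x = 3 * x by push_cast; ring, Real.cos_three_mul,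
      Real.cos_two_mul]
    ring
  | more n h0 h1 =>
    simp only [chebyshevV, Polynomial.eval_sub, Polynomial.eval_mul, Polynomial.eval_ofNat,
      Polynomial.eval_X]
    have e2 : (2 * ((n + 2 : ℕ) : ℝ) + 1) * x = (2 * ((n + 1 : ℕ) : ℝ) + 1) * x + 2 * x := by
      push_cast; ring
    have e0 : (2 * (n : ℝ) + 1) * x = (2 * ((n + 1 : ℕ) : ℝ) + 1) * x - 2 * x := by
      push_cast; ring
    rw [e0, Real.cos_sub] at h0
    rw [e2, Real.cos_add]
    linear_combination 2 * Real.cos (2 * x) * h1 - h0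

lemma chebyshevV_natDegree_le_and_coeff (n : ℕ) :
    (chebyshevV n).natDegree ≤ n ∧ (chebyshevV n).coeff n = 2 ^ n := by
  induction n using Nat.twoStepInduction with
  | zero => simp [chebyshevV]
  | one =>
    refine ⟨?_, ?_⟩
    · simp only [chebyshevV]
      compute_degree
    · simp [chebyshevV, Polynomial.coeff_one, ← Polynomial.C_ofNat]
  | more n h0 h1 =>
    simp only [chebyshevV]
    have h2 : (2 * Polynomial.X * chebyshevV (n + 1)).natDegree ≤ n + 2 := by
      refine Polynomial.natDegree_mul_le.trans ?_
      have : (2 * Polynomial.X : Polynomial ℝ).natDegree ≤ 1 := by compute_degree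
      omega
    refine ⟨(Polynomial.natDegree_sub_le_of_le h2 h0.1).trans (by omega), ?_⟩
    rw [Polynomial.coeff_sub,
      Polynomial.coeff_eq_zero_of_natDegree_lt (show (chebyshevV n).natDegree < n + 2 by omega),
      mul_assoc, ← Polynomial.C_ofNat, Polynomial.coeff_C_mul, Polynomial.coeff_X_mul, h1.2]
    ring

lemma cos_two_mul_injOn : Set.InjOn (fun x : ℝ => Real.cos (2 * x)) (Set.Icc 0 (π / 2)) := by
  intro x hx y hy h
  have := Real.injOn_cos (x₁ := 2 * x) (x₂ := 2 * y)
    ⟨by linarith [hx.1], by linarith [hx.2]⟩ ⟨by linarith [hy.1], by linarith [hy.2]⟩ h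
  linarith

/-- An odd cosine sum with the maximal number of zeros in `(0, π / 2)` factors. -/
lemma sum_cos_eq_prod (m : ℕ) (b : ℕ → ℝ) (x : Fin m → ℝ) (hx : Function.Injective x)
    (hxI : ∀ k, x k ∈ Set.Ioo 0 (π / 2))
    (hx0 : ∀ k, ∑ i ∈ Finset.range (m + 1), b i * Real.cos ((2 * i + 1) * x k) = 0) (z : ℝ) :
    ∑ i ∈ Finset.range (m + 1), b i * Real.cos ((2 * i + 1) * z)
      = Real.cos z * (b m * 2 ^ m * ∏ k, (Real.cos (2 * z) - Real.cos (2 * x k))) := by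
  set P : Polynomial ℝ := ∑ i ∈ Finset.range (m + 1), Polynomial.C (b i) * chebyshevV i with hP
  set D : Polynomial ℝ := ∏ k, (Polynomial.X - Polynomial.C (Real.cos (2 * x k))) with hD
  have hPeval (y : ℝ) : ∑ i ∈ Finset.range (m + 1), b i * Real.cos ((2 * i + 1) * y)
      = Real.cos y * P.eval (Real.cos (2 * y)) := by
    rw [hP, Polynomial.eval_finsetSum, Finset.mul_sum]
    refine Finset.sum_congr rfl fun i _ => ?_
    rw [← cos_mul_chebyshevV_eval, Polynomial.eval_mul, Polynomial.eval_C]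
    ring
  have hDmonic : D.Monic := Polynomial.monic_prod_of_monic _ _ fun k _ => Polynomial.monic_X_sub_C _
  have hDdeg : D.natDegree = m := by
    rw [hD, Polynomial.natDegree_prod_of_monic _ _ fun k _ => Polynomial.monic_X_sub_C _]
    simp
  have hPcoeff (j : ℕ) (hj : m ≤ j) : P.coeff j = if j = m then b m * 2 ^ m else 0 := by
    rw [hP, Polynomial.finsetSum_coeff, Finset.sum_range_succ, Finset.sum_eq_zero, zero_add,
      Polynomial.coeff_C_mul]
    · split_ifs with h
      · rw [h, (chebyshevV_natDegree_le_and_coeff m).2]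
      · rw [Polynomial.coeff_eq_zero_of_natDegree_lt, mul_zero]
        have := (chebyshevV_natDegree_le_and_coeff m).1
        omega
    · intro i hi
      rw [Polynomial.coeff_C_mul, Polynomial.coeff_eq_zero_of_natDegree_lt, mul_zero]
      have := (chebyshevV_natDegree_le_and_coeff i).1
      have := Finset.mem_range.1 hi
      omega
  have hPD : P = Polynomial.C (b m * 2 ^ m) * D := by
    refine Polynomial.eq_of_degree_sub_lt_of_eval_index_eq
      (Finset.univ : Finset (Fin m)) (v := fun k => Real.cos (2 * x k)) ?_ ?_ ?_
    · intro i _ j _ hij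
      exact hx (cos_two_mul_injOn (Set.Ioo_subset_Icc_self (hxI i))
        (Set.Ioo_subset_Icc_self (hxI j)) hij)
    · rw [Finset.card_univ, Fintype.card_fin, Polynomial.degree_lt_iff_coeff_zero]
      intro j hj
      rw [Polynomial.coeff_sub, hPcoeff j hj, Polynomial.coeff_C_mul]
      split_ifs with h
      · have : D.coeff j = 1 := by rw [h, ← hDdeg]; exact hDmonic
        rw [this, mul_one, sub_self]
      · rw [Polynomial.coeff_eq_zero_of_natDegree_lt (by omega : D.natDegree < j)]
        simp
    · intro k _
      have hcos : Real.cos (x k) ≠ 0 := (Real.cos_pos_of_mem_Ioo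
        ⟨by linarith [(hxI k).1, Real.pi_pos], (hxI k).2⟩).ne'
      have h1 : P.eval (Real.cos (2 * x k)) = 0 := by
        have := hx0 k
        rw [hPeval] at this
        exact (mul_eq_zero.1 this).resolve_left hcos
      rw [h1, Polynomial.eval_mul, hD, Polynomial.eval_prod,
        Finset.prod_eq_zero (Finset.mem_univ k) (by simp), mul_zero]
  rw [hPeval, hPD, hD, Polynomial.eval_mul, Polynomial.eval_prod]
  simp

lemma prod_sub_cos_inj {m : ℕ} {y r : Fin m → ℝ} (hy : Monotone y) (hr : Monotone r)
    (hyI : ∀ k, y k ∈ Set.Icc 0 (π / 2)) (hrI : ∀ k, r k ∈ Set.Icc 0 (π / 2))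
    (h : ∀ z ∈ Set.Ioo 0 (π / 2), ∏ k, (Real.cos (2 * z) - Real.cos (2 * y k))
      = ∏ k, (Real.cos (2 * z) - Real.cos (2 * r k))) : y = r := by
  have hpoly : ((Finset.univ.val.map fun k => Real.cos (2 * y k)).map
        fun a => Polynomial.X - Polynomial.C a).prod
      = ((Finset.univ.val.map fun k => Real.cos (2 * r k)).map
        fun a => Polynomial.X - Polynomial.C a).prod := by
    refine Polynomial.eq_of_infinite_eval_eq _ _ ?_
    have hinf : ((fun x : ℝ => Real.cos (2 * x)) '' Set.Ioo 0 (π / 2)).Infinite :=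
      (Set.Ioo_infinite (by positivity)).image (cos_two_mul_injOn.mono Set.Ioo_subset_Icc_self)
    refine hinf.mono ?_
    rintro _ ⟨z, hz, rfl⟩
    have := h z hz
    simp only [Multiset.map_map, Set.mem_ofPred_eq, Polynomial.eval_multiset_prod]
    simpa [List.prod_ofFn] using this
  have hms := congrArg Polynomial.roots hpoly
  rw [Polynomial.roots_multiset_prod_X_sub_C, Polynomial.roots_multiset_prod_X_sub_C] at hms
  have hanti {f : Fin m → ℝ} (hf : Monotone f) (hfI : ∀ k, f k ∈ Set.Icc 0 (π / 2)) :
      (List.ofFn fun k => Real.cos (2 * f k)).Pairwise (· ≥ ·) := by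
    refine List.pairwise_ofFn.2 fun i j hij => ?_
    have := hf hij.le
    exact Real.cos_le_cos_of_nonneg_of_le_pi (by linarith [(hfI i).1]) (by linarith [(hfI j).2])
      (by linarith)
  have hperm : (List.ofFn fun k => Real.cos (2 * y k)).Perm
      (List.ofFn fun k => Real.cos (2 * r k)) := by
    rw [← Multiset.coe_eq_coe]
    simpa [Fin.univ_val_map] using hms
  have heq := List.ofFn_injective (hperm.eq_of_pairwise' (hanti hy hyI) (hanti hr hrI))
  funext k
  exact cos_two_mul_injOn (hyI k) (hrI k) (congrFun heq k)

/-- Convergence of the products forces convergence of the ordered zeros. -/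
lemma tendsto_of_tendsto_prod {α : Type*} {L : Filter α} {m : ℕ} {x : α → Fin m → ℝ}
    {r : Fin m → ℝ} (hx : ∀ᶠ a in L, Monotone (x a) ∧ ∀ k, x a k ∈ Set.Icc 0 (π / 2))
    (hr : Monotone r) (hrI : ∀ k, r k ∈ Set.Icc 0 (π / 2))
    (h : ∀ z ∈ Set.Ioo 0 (π / 2),
      Filter.Tendsto (fun a => ∏ k, (Real.cos (2 * z) - Real.cos (2 * x a k))) L
        (nhds (∏ k, (Real.cos (2 * z) - Real.cos (2 * r k))))) :
    Filter.Tendsto x L (nhds r) := by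
  rw [Filter.tendsto_iff_ultrafilter]
  intro U hU
  have hK : IsCompact ({y : Fin m → ℝ | Monotone y} ∩ Set.univ.pi fun _ => Set.Icc 0 (π / 2)) :=
    (isCompact_univ_pi fun _ => isCompact_Icc).inter_left isClosed_monotone
  obtain ⟨y, ⟨hy, hyI⟩, hUy⟩ := hK.ultrafilter_le_nhds' (U.map x)
    ((hx.filter_mono hU).mono fun a ha => ⟨ha.1, fun k _ => ha.2 k⟩)
  have hUy' : Filter.Tendsto x U (nhds y) := hUy
  have hyr : y = r := by
    refine prod_sub_cos_inj hy hr (fun k => hyI k trivial) hrI fun z hz => ?_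
    have hc : Continuous fun v : Fin m → ℝ => ∏ k, (Real.cos (2 * z) - Real.cos (2 * v k)) := by
      fun_prop
    exact tendsto_nhds_unique ((hc.tendsto y).comp hUy') ((h z hz).mono_left hU)
  rwa [← hyr]

/-- A form of Descartes' rule of signs for exponential sums: at most `k` zeros if the signs of the
coefficients are those of a product of `k` linear factors in the exponents. -/
lemma exists_expSum_ne_zero {ι : Type*} (s : Finset ι) (l : ι → ℝ) (μ : ℕ → ℝ) (k : ℕ) (a : ι → ℝ)
    (hnonneg : ∀ i ∈ s, 0 ≤ a i * ∏ j ∈ Finset.range k, (μ j - l i))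
    (hpos : ∃ i ∈ s, 0 < a i * ∏ j ∈ Finset.range k, (μ j - l i))
    (τ : ℕ → ℝ) (hτ : ∀ i < k, τ i < τ (i + 1)) :
    ∃ i ≤ k, ∑ j ∈ s, a j * Real.exp (τ i * l j) ≠ 0 := by
  induction k generalizing a τ with
  | zero =>
    refine ⟨0, le_rfl, ne_of_gt ?_⟩
    simp only [Finset.range_zero, Finset.prod_empty, mul_one] at hnonneg hpos
    refine Finset.sum_pos' (fun j hj => mul_nonneg (hnonneg j hj) (Real.exp_pos _).le) ?_
    obtain ⟨i, hi, h⟩ := hpos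
    exact ⟨i, hi, mul_pos h (Real.exp_pos _)⟩
  | succ k ih =>
    by_contra! hzero
    have hderiv (t : ℝ) : HasDerivAt (fun t => ∑ j ∈ s, a j * Real.exp (t * (l j - μ k)))
        (∑ j ∈ s, a j * (Real.exp (t * (l j - μ k)) * (l j - μ k))) t := by
      refine HasDerivAt.fun_sum fun j _ => HasDerivAt.const_mul _ ?_
      simpa using ((hasDerivAt_id t).mul_const (l j - μ k)).exp
    have hfac (t : ℝ) : ∑ j ∈ s, a j * Real.exp (t * (l j - μ k))
        = Real.exp (-(t * μ k)) * ∑ j ∈ s, a j * Real.exp (t * l j) := by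
      rw [Finset.mul_sum]
      refine Finset.sum_congr rfl fun j _ => ?_
      rw [mul_left_comm, ← Real.exp_add]
      ring_nf
    have hroot (i : ℕ) (hi : i ≤ k + 1) :
        ∑ j ∈ s, a j * Real.exp (τ i * (l j - μ k)) = 0 := by
      rw [hfac, hzero i hi, mul_zero]
    have hrolle (i : ℕ) : ∃ c, i < k + 1 → c ∈ Set.Ioo (τ i) (τ (i + 1)) ∧
        ∑ j ∈ s, a j * (Real.exp (c * (l j - μ k)) * (l j - μ k)) = 0 := by
      by_cases hi : i < k + 1
      · obtain ⟨c, hc, hc0⟩ := exists_hasDerivAt_eq_zero (hτ i hi)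
          (fun t _ => (hderiv t).continuousAt.continuousWithinAt)
          ((hroot i hi.le).trans (hroot (i + 1) hi).symm) (fun t _ => hderiv t)
        exact ⟨c, fun _ => ⟨hc, hc0⟩⟩
      · exact ⟨0, fun h => absurd h hi⟩
    choose c hc using hrolle
    have hprod (i : ι) : a i * (μ k - l i) * ∏ j ∈ Finset.range k, (μ j - l i)
        = a i * ∏ j ∈ Finset.range (k + 1), (μ j - l i) := by
      rw [Finset.prod_range_succ]
      ring
    obtain ⟨i, hi, hne⟩ := ih (fun i => a i * (μ k - l i))
      (fun i hi => by rw [hprod]; exact hnonneg i hi)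
      (by simpa only [hprod] using hpos) c
      (fun i hi => (hc i (by omega)).1.2.trans (hc (i + 1) (by omega)).1.1)
    apply hne
    have h0 := (hc i (by omega)).2
    have : ∑ j ∈ s, a j * (μ k - l j) * Real.exp (c i * l j)
        = -Real.exp (c i * μ k)
          * ∑ j ∈ s, a j * (Real.exp (c i * (l j - μ k)) * (l j - μ k)) := by
      rw [Finset.mul_sum]
      refine Finset.sum_congr rfl fun j _ => ?_
      have e : Real.exp (c i * l j) = Real.exp (c i * μ k) * Real.exp (c i * (l j - μ k)) := by
        rw [← Real.exp_add]
        ring_nf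
      rw [e]
      ring
    rw [this, h0, mul_zero]

lemma cos_mul_prod_nonneg (k : ℕ) (z : ℝ) (hz : 0 ≤ z) (hzk : z ≤ (2 * k + 1) * (π / 2)) :
    0 ≤ Real.cos z * ∏ j ∈ Finset.range k, (((2 * j + 1) * (π / 2)) ^ 2 - z ^ 2) := by
  have hpi := Real.pi_pos
  induction k with
  | zero =>
    simp only [Finset.range_zero, Finset.prod_empty, mul_one]
    exact Real.cos_nonneg_of_mem_Icc ⟨by linarith, by simpa using hzk⟩
  | succ k ih =>
    by_cases h : z ≤ (2 * k + 1) * (π / 2)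
    · rw [Finset.prod_range_succ, ← mul_assoc]
      refine mul_nonneg (ih h) (sub_nonneg.2 ?_)
      gcongr
    · push Not at h
      push_cast at hzk
      have hcos : Real.cos z = (-1) ^ (k + 1) * Real.cos (z - (k + 1 : ℕ) * π) := by
        rw [Real.cos_sub_nat_mul_pi, ← mul_assoc, ← mul_pow]
        simp
      have hprod : ∏ j ∈ Finset.range (k + 1), (((2 * j + 1) * (π / 2)) ^ 2 - z ^ 2)
          = (-1) ^ (k + 1)
            * ∏ j ∈ Finset.range (k + 1), (z ^ 2 - ((2 * j + 1) * (π / 2)) ^ 2) := by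
        have := Finset.prod_neg (s := Finset.range (k + 1))
          (f := fun j : ℕ => z ^ 2 - ((2 * j + 1) * (π / 2)) ^ 2)
        simpa [Finset.card_range] using this
      rw [hcos, hprod, mul_mul_mul_comm, ← mul_pow]
      have h1 : 0 ≤ Real.cos (z - (k + 1 : ℕ) * π) := by
        refine Real.cos_nonneg_of_mem_Icc ⟨?_, ?_⟩ <;> push_cast <;> linarith
      have h2 : 0 ≤ ∏ j ∈ Finset.range (k + 1), (z ^ 2 - ((2 * j + 1) * (π / 2)) ^ 2) := by
        refine Finset.prod_nonneg fun j hj => sub_nonneg.2 ?_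
        have hj' : (j : ℝ) ≤ k := by
          exact_mod_cast Nat.lt_succ_iff.1 (Finset.mem_range.1 hj)
        have : (2 * (j : ℝ) + 1) * (π / 2) ≤ z := by nlinarith
        gcongr
      simpa using mul_nonneg h1 h2

/-- For fixed `x`, the partition function has few zeros in the variable `t`. -/
lemma card_zeros_le (m k : ℕ) (x : ℝ) (hx : x ∈ Set.Ioo 0 (π / 2))
    (hxk : (2 * m + 1) * x ≤ (2 * k + 1) * (π / 2)) (T : Finset ℝ)
    (hT : ∀ t ∈ T, cwReal (2 * m + 1) t x = 0) : T.card ≤ k := by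
  by_contra! hcard
  obtain ⟨B, hBT, hB⟩ := Finset.exists_subset_card_eq (Nat.succ_le_of_lt hcard)
  have hx0 : x ≠ 0 := hx.1.ne'
  have hprod (i : ℕ) : ∏ j ∈ Finset.range k,
        (((2 * (j : ℝ) + 1) * (π / 2) / x) ^ 2 - (2 * (i : ℝ) + 1) ^ 2)
      = (∏ j ∈ Finset.range k, (((2 * (j : ℝ) + 1) * (π / 2)) ^ 2 - ((2 * i + 1) * x) ^ 2))
        / (x ^ 2) ^ k := by
    rw [show (x ^ 2) ^ k = ∏ _j ∈ Finset.range k, x ^ 2 by simp, ← Finset.prod_div_distrib]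
    refine Finset.prod_congr rfl fun j _ => ?_
    field_simp
  have hchoose (i : ℕ) (hi : i ∈ Finset.range (m + 1)) :
      (0 : ℝ) < 2 * ((2 * m + 1).choose (m + 1 + i) : ℝ) := by
    have : 0 < (2 * m + 1).choose (m + 1 + i) :=
      Nat.choose_pos (by have := Finset.mem_range.1 hi; omega)
    positivity
  obtain ⟨i, hi, hne⟩ := exists_expSum_ne_zero (Finset.range (m + 1))
    (fun i : ℕ => (2 * (i : ℝ) + 1) ^ 2) (fun j => ((2 * (j : ℝ) + 1) * (π / 2) / x) ^ 2) k
    (fun i => 2 * ((2 * m + 1).choose (m + 1 + i) : ℝ) * Real.cos ((2 * i + 1) * x))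
    (by
      intro i hi
      rw [hprod, mul_assoc, mul_div_assoc']
      have him : (i : ℝ) ≤ m := by exact_mod_cast Nat.lt_succ_iff.1 (Finset.mem_range.1 hi)
      have hix : (2 * (i : ℝ) + 1) * x ≤ (2 * m + 1) * x := by
        have := hx.1
        gcongr
      refine mul_nonneg (hchoose i hi).le (div_nonneg ?_ (by positivity))
      exact cos_mul_prod_nonneg k _ (by have := hx.1; positivity) (hix.trans hxk))
    (by
      refine ⟨0, by simp, mul_pos (mul_pos (hchoose 0 (by simp)) ?_) ?_⟩
      · simp only [CharP.cast_eq_zero, mul_zero, zero_add, one_mul]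
        exact Real.cos_pos_of_mem_Ioo ⟨by linarith [hx.1, Real.pi_pos], hx.2⟩
      · refine Finset.prod_pos fun j _ => sub_pos.2 ?_
        simp only [CharP.cast_eq_zero, mul_zero, zero_add, one_pow]
        refine one_lt_pow₀ ?_ two_ne_zero
        rw [one_lt_div hx.1]
        have hj : (0 : ℝ) ≤ j := by positivity
        nlinarith [hx.2, Real.pi_pos])
    (fun i => if h : i < k + 1 then B.orderEmbOfFin hB ⟨i, h⟩ else 0)
    (by
      intro i hi
      rw [dif_pos (by omega), dif_pos (by omega)]
      exact (B.orderEmbOfFin hB).strictMono (Fin.mk_lt_mk.2 (Nat.lt_succ_self i)))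
  apply hne
  rw [dif_pos (by omega)]
  have h0 := hT _ (hBT (B.orderEmbOfFin_mem hB ⟨i, by omega⟩))
  rw [cwReal_odd] at h0
  rw [← h0]
  exact Finset.sum_congr rfl fun j _ => by ring

lemma cwReal_eq_prod {m : ℕ} {t : ℝ} {x : Fin m → ℝ} (hx : StrictMono x)
    (hxI : ∀ k, x k ∈ Set.Ioo 0 (π / 2) ∧ cwReal (2 * m + 1) t (x k) = 0) (z : ℝ) :
    cwReal (2 * m + 1) t z = Real.cos z * (2 * Real.exp (t * (2 * m + 1) ^ 2) * 2 ^ m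
      * ∏ k, (Real.cos (2 * z) - Real.cos (2 * x k))) := by
  have h := sum_cos_eq_prod m
    (fun i => 2 * ((2 * m + 1).choose (m + 1 + i) : ℝ) * Real.exp (t * (2 * i + 1) ^ 2)) x
    hx.injective (fun k => (hxI k).1) (fun k => by rw [← cwReal_odd]; exact (hxI k).2) z
  rw [← cwReal_odd] at h
  rw [h, show m + 1 + m = 2 * m + 1 by ring, Nat.choose_self]
  push_cast
  ring

lemma cwReal_zero_left (n : ℕ) (z : ℝ) : cwReal n 0 z = (2 * Real.cos z) ^ n := by
  have h := cwReal_eq_sum_exp n 0 z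
  have h2 : ((2 * Real.cos z : ℝ) : ℂ) ^ n
      = (Complex.exp (z * Complex.I) + Complex.exp (-z * Complex.I)) ^ n := by
    push_cast
    rw [Complex.two_cos]
  rw [← Complex.ofReal_inj, Complex.ofReal_pow, h, h2, add_pow]
  refine Finset.sum_congr rfl fun k hk => ?_
  have hk' : k ≤ n := by simpa [Nat.lt_succ_iff] using hk
  rw [← Complex.exp_nat_mul, ← Complex.exp_nat_mul, ← Complex.exp_add, mul_comm, Nat.cast_sub hk']
  push_cast
  ring_nf

lemma cos_odd_mul_eq_prod (m : ℕ) (z : ℝ) :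
    Real.cos ((2 * m + 1) * z) = Real.cos z * (2 ^ m *
      ∏ k : Fin m, (Real.cos (2 * z) - Real.cos (2 * ((2 * k + 1) * π / (2 * (2 * m + 1)))))) := by
  have hpi := Real.pi_pos
  have hsum (y : ℝ) : ∑ i ∈ Finset.range (m + 1),
      (if i = m then (1 : ℝ) else 0) * Real.cos ((2 * i + 1) * y) = Real.cos ((2 * m + 1) * y) := by
    simp
  have h := sum_cos_eq_prod m (fun i => if i = m then (1 : ℝ) else 0)
    (fun k : Fin m => (2 * (k : ℝ) + 1) * π / (2 * (2 * m + 1))) ?_ ?_ ?_ z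
  · rw [hsum] at h
    simpa using h
  · intro i j hij
    have : (2 * (i : ℝ) + 1) * π = (2 * j + 1) * π := by
      simpa [div_left_inj' (show (2 * (2 * (m : ℝ) + 1)) ≠ 0 by positivity)] using hij
    have := mul_right_cancel₀ hpi.ne' this
    exact Fin.ext (by exact_mod_cast (by linarith : (i : ℝ) = j))
  · intro k
    have hk : (k : ℝ) + 1 ≤ m := by exact_mod_cast k.2
    refine ⟨by positivity, ?_⟩
    rw [div_lt_div_iff₀ (by positivity) two_pos]
    nlinarith
  · intro k
    rw [hsum, Real.cos_eq_zero_iff]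
    refine ⟨k, ?_⟩
    push_cast
    field_simp

lemma continuous_cwReal_left (n : ℕ) (z : ℝ) : Continuous fun t => cwReal n t z := by
  unfold cwReal
  fun_prop

lemma tendsto_cwReal_atTop (m : ℕ) (z : ℝ) :
    Filter.Tendsto (fun t => cwReal (2 * m + 1) t z / Real.exp (t * (2 * m + 1) ^ 2)) Filter.atTop
      (nhds (2 * Real.cos ((2 * m + 1) * z))) := by
  have h (t : ℝ) : cwReal (2 * m + 1) t z / Real.exp (t * (2 * m + 1) ^ 2)
      = ∑ i ∈ Finset.range m, 2 * ((2 * m + 1).choose (m + 1 + i) : ℝ)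
          * Real.cos ((2 * i + 1) * z) * Real.exp (t * ((2 * i + 1) ^ 2 - (2 * m + 1) ^ 2))
        + 2 * Real.cos ((2 * m + 1) * z) := by
    rw [cwReal_odd, Finset.sum_range_succ, add_div, Finset.sum_div,
      show m + 1 + m = 2 * m + 1 by ring, Nat.choose_self]
    congr 1
    · refine Finset.sum_congr rfl fun i _ => ?_
      rw [mul_sub, Real.exp_sub]
      ring
    · field_simp
      simp
  simp only [h]
  have hsum : Filter.Tendsto (fun t : ℝ => ∑ i ∈ Finset.range m,
      2 * ((2 * m + 1).choose (m + 1 + i) : ℝ) * Real.cos ((2 * i + 1) * z)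
        * Real.exp (t * ((2 * i + 1) ^ 2 - (2 * m + 1) ^ 2))) Filter.atTop
      (nhds (∑ i ∈ Finset.range m,
        2 * ((2 * m + 1).choose (m + 1 + i) : ℝ) * Real.cos ((2 * i + 1) * z) * 0)) := by
    refine tendsto_finsetSum _ fun i hi => Filter.Tendsto.const_mul _ ?_
    have him : (i : ℝ) < m := by exact_mod_cast Finset.mem_range.1 hi
    have hneg : (2 * (i : ℝ) + 1) ^ 2 - (2 * m + 1) ^ 2 < 0 := by
      nlinarith [(Nat.cast_nonneg i : (0 : ℝ) ≤ i)]
    exact Real.tendsto_exp_atBot.comp (Filter.tendsto_id.atTop_mul_const_of_neg hneg)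
  simp only [mul_zero, Finset.sum_const_zero] at hsum
  simpa only [zero_add] using hsum.add_const (2 * Real.cos ((2 * m + 1) * z))

/-- The ordered zeros in `(0, π / 2)`, extended by `π / 2` to nonpositive times. -/
lemma exists_zero_curves (m : ℕ) :
    ∃ X : ℝ → Fin m → ℝ, (∀ k, X 0 k = π / 2) ∧
      (∀ t, 0 < t → StrictMono (X t) ∧ (∀ k, X t k ∈ Set.Ioo 0 (π / 2)) ∧
        ∀ z ∈ Set.Ioo 0 (π / 2), cwReal (2 * m + 1) t z = 0 ↔ ∃ k, X t k = z) ∧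
      ContinuousOn X (Set.Ici 0) ∧
      Filter.Tendsto X Filter.atTop
        (nhds fun k => (2 * k + 1) * π / (2 * (2 * m + 1))) := by
  have hpi := Real.pi_pos
  choose x hmono hx using exists_zeros_Ioo m
  set X : ℝ → Fin m → ℝ := fun t => if h : 0 < t then x t h else fun _ => π / 2 with hX
  have hXpos (t : ℝ) (ht : 0 < t) : X t = x t ht := dif_pos ht
  have hX0 : X 0 = fun _ => π / 2 := dif_neg (lt_irrefl 0)
  have hbox (t : ℝ) (ht : 0 ≤ t) : Monotone (X t) ∧ ∀ k, X t k ∈ Set.Icc 0 (π / 2) := by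
    rcases ht.eq_or_lt with rfl | ht
    · rw [hX0]
      exact ⟨monotone_const, fun _ => ⟨by positivity, le_rfl⟩⟩
    · rw [hXpos t ht]
      exact ⟨(hmono t ht).monotone, fun k => Set.Ioo_subset_Icc_self (hx t ht k).1⟩
  have hprod (t : ℝ) (ht : 0 ≤ t) (z : ℝ) :
      cwReal (2 * m + 1) t z = Real.cos z * (2 * Real.exp (t * (2 * m + 1) ^ 2) * 2 ^ m
        * ∏ k, (Real.cos (2 * z) - Real.cos (2 * X t k))) := by
    rcases ht.eq_or_lt with rfl | ht
    · rw [hX0, cwReal_zero_left]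
      simp only [Finset.prod_const, Finset.card_univ, Fintype.card_fin]
      rw [show 2 * (π / 2) = π by ring, Real.cos_pi, Real.cos_two_mul, zero_mul, Real.exp_zero,
        show 2 * Real.cos z ^ 2 - 1 - -1 = 2 * Real.cos z ^ 2 by ring]
      ring_nf
    · rw [hXpos t ht]
      exact cwReal_eq_prod (hmono t ht) (hx t ht) z
  have hcos (z : ℝ) (hz : z ∈ Set.Ioo 0 (π / 2)) : Real.cos z ≠ 0 :=
    (Real.cos_pos_of_mem_Ioo ⟨by linarith [hz.1], hz.2⟩).ne'
  have hprod' (z : ℝ) (hz : z ∈ Set.Ioo 0 (π / 2)) (t : ℝ) (ht : 0 ≤ t) :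
      cwReal (2 * m + 1) t z / Real.exp (t * (2 * m + 1) ^ 2) / (Real.cos z * 2 * 2 ^ m)
        = ∏ k, (Real.cos (2 * z) - Real.cos (2 * X t k)) := by
    have := hcos z hz
    rw [hprod t ht z]
    field_simp
  refine ⟨X, fun k => by rw [hX0], fun t ht => ⟨?_, ?_, fun z hz => ?_⟩, fun t₀ ht₀ => ?_, ?_⟩
  · rw [hXpos t ht]
    exact hmono t ht
  · rw [hXpos t ht]
    exact fun k => (hx t ht k).1
  · constructor
    · intro h0
      have h1 := hprod' z hz t ht.le
      rw [h0, zero_div, zero_div] at h1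
      obtain ⟨k, -, hk⟩ := Finset.prod_eq_zero_iff.1 h1.symm
      exact ⟨k, (cos_two_mul_injOn (Set.Ioo_subset_Icc_self hz) ((hbox t ht.le).2 k)
        (sub_eq_zero.1 hk)).symm⟩
    · rintro ⟨k, rfl⟩
      rw [hXpos t ht]
      exact (hx t ht k).2
  · refine tendsto_of_tendsto_prod (eventually_nhdsWithin_of_forall fun t ht => hbox t ht)
      (hbox t₀ ht₀).1 (hbox t₀ ht₀).2 fun z hz => ?_
    rw [← hprod' z hz t₀ ht₀]
    refine Filter.Tendsto.congr' (f₁ := fun t => cwReal (2 * m + 1) t z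
        / Real.exp (t * (2 * m + 1) ^ 2) / (Real.cos z * 2 * 2 ^ m)) ?_ ?_
    · exact eventually_nhdsWithin_of_forall fun t ht => hprod' z hz t ht
    · have hc : Continuous fun t => cwReal (2 * m + 1) t z / Real.exp (t * (2 * m + 1) ^ 2)
          / (Real.cos z * 2 * 2 ^ m) :=
        ((continuous_cwReal_left _ z).div (by fun_prop) fun t => (Real.exp_pos _).ne').div_const _
      exact (hc.tendsto t₀).mono_left nhdsWithin_le_nhds
  · refine tendsto_of_tendsto_prod
      ((Filter.eventually_ge_atTop 0).mono fun t ht => hbox t ht) ?_ ?_ fun z hz => ?_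
    · intro i j hij
      have : (i : ℝ) ≤ j := by exact_mod_cast hij
      dsimp only
      gcongr
    · intro k
      have hk : (k : ℝ) + 1 ≤ m := by exact_mod_cast k.2
      refine ⟨by positivity, ?_⟩
      rw [div_le_div_iff₀ (by positivity) two_pos]
      nlinarith
    · have h1 := (tendsto_cwReal_atTop m z).div_const (Real.cos z * 2 * 2 ^ m)
      rw [cos_odd_mul_eq_prod] at h1
      have hc := hcos z hz
      refine Filter.Tendsto.congr' ((Filter.eventually_ge_atTop 0).mono fun t ht =>
        hprod' z hz t ht) ?_
      convert h1 using 2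
      rw [eq_div_iff (mul_ne_zero (mul_ne_zero hc two_ne_zero) (by positivity))]
      ring

/-- Each zero curve takes every value at most once. -/
lemma zero_curve_injOn {m : ℕ} {X : ℝ → Fin m → ℝ} (hX0 : ∀ k, X 0 k = π / 2)
    (hX : ∀ t, 0 < t → StrictMono (X t) ∧ (∀ k, X t k ∈ Set.Ioo 0 (π / 2)) ∧
      ∀ z ∈ Set.Ioo 0 (π / 2), cwReal (2 * m + 1) t z = 0 ↔ ∃ k, X t k = z)
    (hXc : ContinuousOn X (Set.Ici 0))
    (hXlim : Filter.Tendsto X Filter.atTop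
      (nhds fun k => (2 * k + 1) * π / (2 * (2 * m + 1)))) (i : Fin m) :
    Set.InjOn (fun t => X t i) (Set.Ioi 0) := by
  have hpi := Real.pi_pos
  intro t₁ ht₁ t₂ ht₂ h12
  by_contra hne
  set z := X t₁ i with hz
  have hzI : z ∈ Set.Ioo 0 (π / 2) := (hX t₁ ht₁).2.1 i
  -- `k` counts the curves whose limit lies strictly below `z`
  set k : ℕ := ⌈(2 * m + 1) * z / π - 1 / 2⌉₊ with hk
  have hzk : (2 * m + 1) * z ≤ (2 * k + 1) * (π / 2) := by
    have := Nat.le_ceil ((2 * m + 1) * z / π - 1 / 2)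
    rw [← hk, sub_le_iff_le_add, div_le_iff₀ hpi] at this
    linarith
  have hlow (j : ℕ) (hj : j < k) : (2 * j + 1) * π / (2 * (2 * m + 1)) < z := by
    have := Nat.lt_ceil.1 hj
    rw [lt_sub_iff_add_lt, lt_div_iff₀ hpi] at this
    rw [div_lt_iff₀ (by positivity)]
    linarith
  have hkm : k ≤ m := by
    refine Nat.ceil_le.2 ?_
    rw [sub_le_iff_le_add, div_le_iff₀ hpi]
    have := hzI.2
    nlinarith [(by positivity : (0 : ℝ) ≤ m)]
  have hex (j : Fin k) : ∃ t, 0 < t ∧ X t (Fin.castLE hkm j) = z := by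
    have hlim := (tendsto_pi_nhds.1 hXlim (Fin.castLE hkm j)).eventually_lt_const (hlow j j.2)
    obtain ⟨b, hb, hb0⟩ := (hlim.and (Filter.eventually_gt_atTop 0)).exists
    have hcont : ContinuousOn (fun t => X t (Fin.castLE hkm j)) (Set.Icc 0 b) :=
      ((continuousOn_pi.1 hXc) _).mono Set.Icc_subset_Ici_self
    obtain ⟨t, ht, hte⟩ := intermediate_value_Icc' hb0.le hcont
      ⟨hb.le, by rw [hX0]; exact hzI.2.le⟩
    refine ⟨t, lt_of_le_of_ne ht.1 ?_, hte⟩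
    rintro rfl
    simp only [hX0] at hte
    exact hzI.2.ne' hte
  choose T hT0 hT using hex
  have hTinj : Function.Injective T := fun a b hab => by
    have h := hT a
    rw [hab, ← hT b] at h
    have := (hX _ (hT0 b)).1.injective h
    exact Fin.castLE_injective hkm this
  obtain ⟨s, hs0, hsz, hsT⟩ : ∃ s, 0 < s ∧ X s i = z ∧ ∀ j, T j ≠ s := by
    have haux (s : ℝ) (hs : 0 < s) (hsz : X s i = z) (j : Fin k) (hj : T j = s) :
        Fin.castLE hkm j = i := by
      have h := hT j
      rw [hj, ← hsz] at h
      exact (hX s hs).1.injective h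
    by_contra! hcon
    obtain ⟨a, ha⟩ := hcon t₁ ht₁ rfl
    obtain ⟨b, hb⟩ := hcon t₂ ht₂ h12.symm
    have hab : a = b := Fin.castLE_injective hkm
      ((haux t₁ ht₁ rfl a ha).trans (haux t₂ ht₂ h12.symm b hb).symm)
    exact hne (by rw [← ha, ← hb, hab])
  have hcard := card_zeros_le m k z hzI hzk (insert s (Finset.univ.image T)) (by
    intro t ht
    rcases Finset.mem_insert.1 ht with rfl | ht
    · exact ((hX _ hs0).2.2 z hzI).2 ⟨i, hsz⟩
    · obtain ⟨j, -, rfl⟩ := Finset.mem_image.1 ht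
      exact ((hX _ (hT0 j)).2.2 z hzI).2 ⟨_, hT j⟩)
  rw [Finset.card_insert_of_notMem (by simpa using hsT),
    Finset.card_image_of_injective _ hTinj] at hcard
  simp at hcard

lemma strictAntiOn_of_continuousOn_of_injOn {f : ℝ → ℝ} (hc : ContinuousOn f (Set.Ici 0))
    (hi : Set.InjOn f (Set.Ioi 0)) (h0 : ∀ t, 0 < t → f t < f 0) :
    StrictAntiOn f (Set.Ici 0) := by
  have hinj : Set.InjOn f (Set.Ici 0) := by
    intro a ha b hb hab
    rcases (Set.mem_Ici.1 ha).eq_or_lt with rfl | ha' <;>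
      rcases (Set.mem_Ici.1 hb).eq_or_lt with rfl | hb'
    · rfl
    · exact absurd hab (h0 b hb').ne'
    · exact absurd hab (h0 a ha').ne
    · exact hi ha' hb' hab
  intro a ha b hb hab
  have hb0 : 0 < b := lt_of_le_of_lt ha hab
  exact (hc.mono Set.Icc_subset_Ici_self).strictAntiOn_of_injOn_Icc hb0.le (h0 b hb0).le
    (hinj.mono Set.Icc_subset_Ici_self) ⟨ha, hab.le⟩ ⟨hb, le_rfl⟩ hab

theorem stmt13 (n : ℕ) (hn : 0 < n) (hodd : Odd n) :
    (∀ t : ℝ, 0 ≤ t → CWZ n t ((π / 2 : ℝ) : ℂ) = 0) ∧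
    ∃ x : ℕ → ℝ → ℝ,
      (∀ k ∈ Finset.Icc 1 ((n - 1) / 2), ContinuousOn (x k) (Set.Ici 0)) ∧
      (∀ k ∈ Finset.Icc 1 ((n - 1) / 2), x k 0 = π / 2) ∧
      (∀ t : ℝ, 0 < t →
        (∀ k ∈ Finset.Icc 1 ((n - 1) / 2), 0 < x k t ∧ x k t < π / 2) ∧
        (∀ k, 1 ≤ k → k < (n - 1) / 2 → x k t < x (k + 1) t) ∧
        {z : ℝ | z ∈ Set.Ioo 0 (π / 2) ∧ CWZ n t z = 0}
          = (fun k => x k t) '' Set.Icc 1 ((n - 1) / 2)) ∧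
      (∀ k ∈ Finset.Icc 1 ((n - 1) / 2),
        StrictAntiOn (x k) (Set.Ici 0) ∧
        Filter.Tendsto (x k) Filter.atTop
          (nhds ((2 * (k : ℝ) - 1) * π / (2 * (n : ℝ))))) := by
  obtain ⟨m, rfl⟩ := hodd
  have hm : (2 * m + 1 - 1) / 2 = m := by omega
  rw [hm]
  refine ⟨fun t _ => ?_, ?_⟩
  · rw [CWZ_eq_cwReal, cwReal_odd, Complex.ofReal_eq_zero]
    refine Finset.sum_eq_zero fun i _ => mul_eq_zero_of_right _ ?_
    rw [Real.cos_eq_zero_iff]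
    exact ⟨i, by push_cast; ring⟩
  obtain ⟨X, hX0, hX, hXc, hXlim⟩ := exists_zero_curves m
  have hanti (i : Fin m) : StrictAntiOn (fun t => X t i) (Set.Ici 0) :=
    strictAntiOn_of_continuousOn_of_injOn (continuousOn_pi.1 hXc i)
      (zero_curve_injOn hX0 hX hXc hXlim i) fun t ht => by
        simpa only [hX0] using ((hX t ht).2.1 i).2
  set x : ℕ → ℝ → ℝ := fun k t => if h : k - 1 < m then X t ⟨k - 1, h⟩ else 0 with hx
  have hxk (k : ℕ) (hk : k ∈ Finset.Icc 1 m) : ∃ i : Fin m, k = i + 1 ∧ x k = fun t => X t i := by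
    have h := Finset.mem_Icc.1 hk
    refine ⟨⟨k - 1, by omega⟩, by simp only; omega, ?_⟩
    funext t
    exact dif_pos (by omega)
  refine ⟨x, fun k hk => ?_, fun k hk => ?_, fun t ht => ⟨fun k hk => ?_, fun k h1 h2 => ?_, ?_⟩,
    fun k hk => ?_⟩
  · obtain ⟨i, -, h⟩ := hxk k hk
    rw [h]
    exact continuousOn_pi.1 hXc i
  · obtain ⟨i, -, h⟩ := hxk k hk
    rw [h]
    exact hX0 i
  · obtain ⟨i, -, h⟩ := hxk k hk
    rw [h]
    exact (hX t ht).2.1 i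
  · obtain ⟨i, hi, h⟩ := hxk k (Finset.mem_Icc.2 ⟨h1, by omega⟩)
    obtain ⟨j, hj, h'⟩ := hxk (k + 1) (Finset.mem_Icc.2 ⟨by omega, by omega⟩)
    rw [h, h']
    exact (hX t ht).1 (Fin.lt_def.2 (by omega))
  · ext z
    simp only [Set.mem_ofPred_eq, Set.mem_image, CWZ_eq_cwReal, Complex.ofReal_eq_zero]
    constructor
    · rintro ⟨hz, hz0⟩
      obtain ⟨i, rfl⟩ := ((hX t ht).2.2 z hz).1 hz0
      refine ⟨i + 1, ⟨by omega, by omega⟩, ?_⟩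
      exact dif_pos (show (i : ℕ) + 1 - 1 < m by omega)
    · rintro ⟨k, hk, rfl⟩
      obtain ⟨i, -, h⟩ := hxk k (Finset.mem_Icc.2 hk)
      rw [h]
      exact ⟨(hX t ht).2.1 i, ((hX t ht).2.2 _ ((hX t ht).2.1 i)).2 ⟨i, rfl⟩⟩
  · obtain ⟨i, hi, h⟩ := hxk k hk
    rw [h]
    refine ⟨hanti i, ?_⟩
    convert tendsto_pi_nhds.1 hXlim i using 2
    rw [hi]
    push_cast
    ring
end

section
/- Let n be a positive integer and t ≥ 0. If n is even, then there exist real numbers 0 < x_1 ≤ x_2 ≤ … ≤ x_{n/2} ≤ π/2 such that for every x ∈ ℂ, Z_{n,t}(x) = Z_{n,t}(0) · ∏_{j=1}^{n/2} (sin²x_j − sin²x)/sin²x_j. If n is odd, then there exist real numbers 0 < x_1 ≤ x_2 ≤ … ≤ x_{(n−1)/2} ≤ π/2 such that for every x ∈ ℂ, Z_{n,t}(x) = Z_{n,t}(0) · cos(x) · ∏_{j=1}^{(n−1)/2} (sin²x_j − sin²x)/sin²x_j. -/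
open scoped Real

open Polynomial Filter Topology

lemma multiset_prod_map_lt_of_nonneg {ι : Type*} {s : Multiset ι} (hs : s ≠ 0) {f g : ι → ℝ}
    (h0 : ∀ i ∈ s, 0 ≤ f i) (h : ∀ i ∈ s, f i < g i) :
    (s.map f).prod < (s.map g).prod := by
  induction s using Multiset.induction_on with
  | empty => exact absurd rfl hs
  | cons a s ih =>
    have ha := h a (Multiset.mem_cons_self a s)
    have ha0 := h0 a (Multiset.mem_cons_self a s)
    rcases eq_or_ne s 0 with rfl | hs'
    · simpa using ha
    · have hlt := ih hs' (fun i hi => h0 i (Multiset.mem_cons_of_mem hi))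
        (fun i hi => h i (Multiset.mem_cons_of_mem hi))
      have hnn : 0 ≤ (s.map f).prod := Multiset.prod_nonneg (by
        intro x hx
        obtain ⟨i, hi, rfl⟩ := Multiset.mem_map.1 hx
        exact h0 i (Multiset.mem_cons_of_mem hi))
      simp only [Multiset.map_cons, Multiset.prod_cons]
      exact mul_lt_mul'' ha hlt ha0 hnn

lemma norm_mul_sub_sq_sub_norm_sub_mul_sq (R : ℝ) (w ζ : ℂ) :
    ‖R * w - ζ‖ ^ 2 - ‖w - R * ζ‖ ^ 2 = (R ^ 2 - 1) * (‖w‖ ^ 2 - ‖ζ‖ ^ 2) := by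
  simp only [Complex.sq_norm, Complex.normSq_apply, Complex.sub_re, Complex.sub_im,
    Complex.mul_re, Complex.mul_im, Complex.ofReal_re, Complex.ofReal_im]
  ring

lemma norm_multiset_prod_map (s : Multiset ℂ) (f : ℂ → ℂ) :
    ‖(s.map f).prod‖ = (s.map fun ζ => ‖f ζ‖).prod := by
  simpa [Multiset.map_map] using map_multiset_prod (normHom : ℂ →*₀ ℝ) (s.map f)

/-- The dilation step of the Lee-Yang argument. -/
lemma eval_dilate_add_ne_zero {p : ℂ[X]} (hp : p.natDegree ≠ 0)
    (hroots : ∀ ζ ∈ p.roots, ‖ζ‖ = 1) {R : ℝ} (hR : 1 < R) {w : ℂ} (hw : ‖w‖ ≠ 1) :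
    p.eval (R * w) + (R : ℂ) ^ p.natDegree * p.eval (w / R) ≠ 0 := by
  have hsp := IsAlgClosed.splits p
  have hcard := hsp.natDegree_eq_card_roots
  have hR0 : (R : ℂ) ≠ 0 := by exact_mod_cast (by linarith : R ≠ 0)
  have hlc : p.leadingCoeff ≠ 0 := leadingCoeff_ne_zero.2 (by rintro rfl; simp at hp)
  have hs : p.roots ≠ 0 := by
    intro h
    rw [h] at hcard
    exact hp (by simpa using hcard)
  have h2 : (R : ℂ) ^ p.natDegree * p.eval (w / R)
      = p.leadingCoeff * (p.roots.map fun ζ => w - R * ζ).prod := by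
    have : (R : ℂ) ^ p.natDegree = (p.roots.map fun _ => (R : ℂ)).prod := by
      simp [hcard]
    rw [hsp.eval_eq_prod_roots, this, mul_left_comm, ← Multiset.prod_map_mul]
    congr 3
    ext ζ
    field_simp
  rw [h2, hsp.eval_eq_prod_roots, ← mul_add]
  refine mul_ne_zero hlc fun h => ?_
  have heq := congrArg norm (eq_neg_of_add_eq_zero_left h)
  rw [norm_neg, norm_multiset_prod_map, norm_multiset_prod_map] at heq
  have key : ∀ ζ ∈ p.roots,
      ‖R * w - ζ‖ ^ 2 - ‖w - R * ζ‖ ^ 2 = (R ^ 2 - 1) * (‖w‖ ^ 2 - 1) := fun ζ hζ => by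
    rw [norm_mul_sub_sq_sub_norm_sub_mul_sq, hroots ζ hζ, one_pow]
  have hR2 : 0 < R ^ 2 - 1 := by nlinarith
  rcases lt_or_gt_of_ne hw with hlt | hgt
  · refine (multiset_prod_map_lt_of_nonneg hs (fun ζ _ => norm_nonneg _) fun ζ hζ => ?_).ne heq
    refine lt_of_pow_lt_pow_left₀ 2 (norm_nonneg _) ?_
    have : ‖w‖ ^ 2 - 1 < 0 := by nlinarith [norm_nonneg w]
    nlinarith [key ζ hζ]
  · refine (multiset_prod_map_lt_of_nonneg hs (fun ζ _ => norm_nonneg _) fun ζ hζ => ?_).ne heq.symm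
    refine lt_of_pow_lt_pow_left₀ 2 (norm_nonneg _) ?_
    have : 0 < ‖w‖ ^ 2 - 1 := by nlinarith
    nlinarith [key ζ hζ]

/-- The binomial polynomial `∑ k, (n choose k) c_k X ^ k` with weights `c`. -/
noncomputable def weightedBinomial (n : ℕ) (c : ℕ → ℝ) : ℂ[X] :=
  ∑ k ∈ Finset.range (n + 1), C ((n.choose k * c k : ℝ) : ℂ) * X ^ k

lemma eval_weightedBinomial (n : ℕ) (c : ℕ → ℝ) (w : ℂ) :
    (weightedBinomial n c).eval w
      = ∑ k ∈ Finset.range (n + 1), ((n.choose k * c k : ℝ) : ℂ) * w ^ k := by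
  simp [weightedBinomial, eval_finsetSum]

lemma coeff_weightedBinomial_self (n : ℕ) (c : ℕ → ℝ) :
    (weightedBinomial n c).coeff n = c n := by
  simp only [weightedBinomial, finsetSum_coeff, coeff_C_mul_X_pow]
  simp

lemma natDegree_weightedBinomial {n : ℕ} {c : ℕ → ℝ} (hc : c n ≠ 0) :
    (weightedBinomial n c).natDegree = n := by
  refine natDegree_eq_of_le_of_coeff_ne_zero ?_ ?_
  · refine natDegree_sum_le_of_forall_le _ _ fun k hk => ?_
    exact (natDegree_C_mul_X_pow_le _ _).trans (Nat.lt_succ_iff.1 (Finset.mem_range.1 hk))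
  · rw [coeff_weightedBinomial_self]
    exact_mod_cast hc

lemma eval_weightedBinomial_cosh_mul (n : ℕ) (c : ℕ → ℝ) (a : ℝ) (w : ℂ) :
    2 * (Real.exp (n * a) : ℂ)
        * (weightedBinomial n fun k => Real.cosh (a * (2 * k - n)) * c k).eval w
      = (weightedBinomial n c).eval (Real.exp (2 * a) * w)
        + (Real.exp (2 * a) : ℂ) ^ n * (weightedBinomial n c).eval (w / Real.exp (2 * a)) := by
  simp only [eval_weightedBinomial, Finset.mul_sum, ← Finset.sum_add_distrib]
  refine Finset.sum_congr rfl fun k _ => ?_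
  have h : 2 * Real.exp (n * a) * Real.cosh (a * (2 * k - n))
      = Real.exp (2 * a) ^ k + Real.exp (2 * a) ^ n / Real.exp (2 * a) ^ k := by
    have h1 : Real.exp (2 * a) ^ k = Real.exp (n * a) * Real.exp (a * (2 * k - n)) := by
      rw [← Real.exp_nat_mul, ← Real.exp_add]
      ring_nf
    have h2 : Real.exp (2 * a) ^ n / Real.exp (2 * a) ^ k
        = Real.exp (n * a) * Real.exp (-(a * (2 * k - n))) := by
      rw [← Real.exp_nat_mul, ← Real.exp_nat_mul, ← Real.exp_sub, ← Real.exp_add]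
      ring_nf
    rw [h2, h1, Real.cosh_eq]
    ring
  have h' := congrArg (fun r : ℝ => (r : ℂ)) h
  push_cast at h' ⊢
  rw [mul_pow, div_pow]
  linear_combination (n.choose k * c k * w ^ k : ℂ) * h'

lemma norm_eq_one_of_mem_roots_weightedBinomial {n : ℕ} (hn : n ≠ 0) {a : ℝ} (ha : 0 ≤ a)
    (N : ℕ) :
    ∀ ζ ∈ (weightedBinomial n fun k => Real.cosh (a * (2 * k - n)) ^ N).roots, ‖ζ‖ = 1 := by
  induction N with
  | zero =>
    intro ζ hζ
    have h := (mem_roots'.1 hζ).2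
    rw [IsRoot, eval_weightedBinomial] at h
    have h1 : (ζ + 1) ^ n = 0 := by
      rw [add_pow, ← h]
      exact Finset.sum_congr rfl fun k _ => by simp [mul_comm]
    rw [eq_neg_of_add_eq_zero_left (pow_eq_zero_iff hn |>.1 h1)]
    simp
  | succ N ih =>
    rcases ha.eq_or_lt with rfl | ha
    · simpa using ih
    intro ζ hζ
    by_contra hne
    have h := (mem_roots'.1 hζ).2
    simp only [IsRoot, pow_succ'] at h
    have hdeg : (weightedBinomial n fun k => Real.cosh (a * (2 * k - n)) ^ N).natDegree = n :=
      natDegree_weightedBinomial (pow_pos (Real.cosh_pos _) _).ne'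
    have hkey := eval_dilate_add_ne_zero (by rwa [hdeg]) ih
      (Real.one_lt_exp_iff.2 (by positivity : 0 < 2 * a)) hne
    rw [hdeg, ← eval_weightedBinomial_cosh_mul, h, mul_zero] at hkey
    exact hkey rfl

lemma abs_norm_sub_one_pow_le_norm_eval {p : ℂ[X]} (hlc : 1 ≤ ‖p.leadingCoeff‖)
    (hroots : ∀ ζ ∈ p.roots, ‖ζ‖ = 1) (w : ℂ) :
    |‖w‖ - 1| ^ p.natDegree ≤ ‖p.eval w‖ := by
  have hsp := IsAlgClosed.splits p
  rw [hsp.eval_eq_prod_roots, norm_mul, norm_multiset_prod_map, hsp.natDegree_eq_card_roots]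
  have hle : |‖w‖ - 1| ^ p.roots.card ≤ (p.roots.map fun ζ => ‖w - ζ‖).prod := by
    have : |‖w‖ - 1| ^ p.roots.card = (p.roots.map fun _ => |‖w‖ - 1|).prod := by simp
    rw [this]
    refine Multiset.prod_map_le_prod_map₀ _ _ (fun _ _ => abs_nonneg _) fun ζ hζ => ?_
    rw [← hroots ζ hζ]
    exact abs_norm_sub_norm_le w ζ
  exact hle.trans (le_mul_of_one_le_left ((by positivity : (0 : ℝ) ≤ _).trans hle) hlc)

lemma one_add_sq_div_two_le_cosh (y : ℝ) : 1 + y ^ 2 / 2 ≤ Real.cosh y := by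
  have h : Real.cosh y = 1 + 2 * Real.sinh (y / 2) ^ 2 := by
    have h1 := Real.cosh_two_mul (y / 2)
    rw [Real.cosh_sq, mul_div_cancel₀ y two_ne_zero] at h1
    linarith
  have h2 : (y / 2) ^ 2 ≤ Real.sinh (y / 2) ^ 2 := by
    rw [sq_le_sq, Real.abs_sinh]
    exact Real.self_le_sinh_iff.2 (abs_nonneg _)
  nlinarith

lemma tendsto_cosh_pow_exp {t : ℝ} (ht : 0 ≤ t) (s : ℝ) :
    Tendsto (fun N : ℕ => Real.cosh (√(2 * t / N) * s) ^ N) atTop (𝓝 (Real.exp (t * s ^ 2))) := by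
  have hsq : ∀ N : ℕ, (√(2 * t / N) * s) ^ 2 / 2 = t * s ^ 2 / N := fun N => by
    rw [mul_pow, Real.sq_sqrt (by positivity)]
    ring
  refine tendsto_of_tendsto_of_tendsto_of_le_of_le' (Real.tendsto_one_add_div_pow_exp (t * s ^ 2))
    tendsto_const_nhds (Eventually.of_forall fun N => ?_) ?_
  · have := one_add_sq_div_two_le_cosh (√(2 * t / N) * s)
    rw [hsq] at this
    exact pow_le_pow_left₀ (by positivity) this N
  · filter_upwards [eventually_gt_atTop 0] with N hN
    have := Real.cosh_le_exp_half_sq (√(2 * t / N) * s)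
    rw [hsq] at this
    refine (pow_le_pow_left₀ (Real.cosh_pos _).le this N).trans_eq ?_
    rw [← Real.exp_nat_mul]
    congr 1
    field_simp

/-- The Lee-Yang theorem for the Curie-Weiss polynomial. -/
lemma norm_eq_one_of_eval_eq_zero {n : ℕ} (hn : n ≠ 0) {t : ℝ} (ht : 0 ≤ t) {w : ℂ}
    (hw : (weightedBinomial n fun k => Real.exp (t * (2 * k - n) ^ 2)).eval w = 0) : ‖w‖ = 1 := by
  have hlim : Tendsto (fun N : ℕ => ‖(weightedBinomial n fun k =>
      Real.cosh (√(2 * t / N) * (2 * k - n)) ^ N).eval w‖) atTop (𝓝 0) := by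
    rw [← norm_zero (E := ℂ), ← hw]
    simp only [eval_weightedBinomial]
    refine (tendsto_finsetSum _ fun k _ => ?_).norm
    refine Tendsto.mul_const _ ((Complex.continuous_ofReal.tendsto _).comp ?_)
    exact (tendsto_cosh_pow_exp ht _).const_mul _
  have hle : |‖w‖ - 1| ^ n ≤ 0 := ge_of_tendsto' hlim fun N => by
    set c : ℕ → ℝ := fun k => Real.cosh (√(2 * t / N) * (2 * k - n)) ^ N with hc
    have hdeg : (weightedBinomial n c).natDegree = n :=
      natDegree_weightedBinomial (pow_pos (Real.cosh_pos _) _).ne'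
    have h := abs_norm_sub_one_pow_le_norm_eval (p := weightedBinomial n c) (by
      rw [leadingCoeff, hdeg, coeff_weightedBinomial_self, Complex.norm_real]
      exact (one_le_pow₀ (Real.one_le_cosh _)).trans (le_abs_self _))
      (norm_eq_one_of_mem_roots_weightedBinomial hn (Real.sqrt_nonneg _) N) w
    rwa [hdeg] at h
  have h0 := (pow_eq_zero_iff hn).1 (le_antisymm hle (by positivity))
  linarith [abs_eq_zero.1 h0]

lemma sum_spin (n : ℕ) (s : Finset (Fin n)) :
    ∑ j, spin (decide (j ∈ s)) = 2 * s.card - n := by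
  have h : ∀ j, spin (decide (j ∈ s)) = 2 * (if j ∈ s then 1 else 0) - 1 := fun j => by
    by_cases hj : j ∈ s <;> simp [spin, hj]
    norm_num
  simp [h, mul_comm]

lemma CWZ_eq_sum_choose (n : ℕ) (t : ℝ) (z : ℂ) :
    CWZ n t z = ∑ k ∈ Finset.range (n + 1),
      ((n.choose k * Real.exp (t * (2 * k - n) ^ 2) : ℝ) : ℂ)
        * Complex.exp (Complex.I * z * (2 * k - n)) := by
  have hbij : Function.Bijective (fun (s : Finset (Fin n)) (j : Fin n) => decide (j ∈ s)) := by
    refine ⟨fun s s' h => ?_, fun σ => ⟨Finset.univ.filter fun j => σ j, ?_⟩⟩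
    · ext j
      simpa using congrFun h j
    · ext j
      simp
  have h := Finset.sum_powerset_apply_card (x := (Finset.univ : Finset (Fin n)))
    fun k => Complex.exp (t * (((2 * k - n : ℝ)) : ℂ) ^ 2 + Complex.I * z * ((2 * k - n : ℝ) : ℂ))
  rw [Finset.powerset_univ, Finset.card_univ, Fintype.card_fin] at h
  rw [CWZ, ← Fintype.sum_bijective _ hbij _ _ fun _ => rfl]
  simp only [sum_spin]
  rw [h]
  refine Finset.sum_congr rfl fun k _ => ?_
  rw [nsmul_eq_mul, Complex.exp_add]
  push_cast
  ring

lemma CWZ_eq_exp_mul_eval (n : ℕ) (t : ℝ) (z : ℂ) :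
    CWZ n t z = Complex.exp (-(n * (Complex.I * z)))
      * (weightedBinomial n fun k => Real.exp (t * (2 * k - n) ^ 2)).eval
        (Complex.exp (2 * (Complex.I * z))) := by
  rw [CWZ_eq_sum_choose, eval_weightedBinomial, Finset.mul_sum]
  refine Finset.sum_congr rfl fun k _ => ?_
  rw [mul_left_comm, ← Complex.exp_nat_mul, ← Complex.exp_add]
  ring_nf

lemma im_eq_zero_of_CWZ_eq_zero {n : ℕ} (hn : n ≠ 0) {t : ℝ} (ht : 0 ≤ t) {z : ℂ}
    (hz : CWZ n t z = 0) : z.im = 0 := by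
  rw [CWZ_eq_exp_mul_eval] at hz
  have h := norm_eq_one_of_eval_eq_zero hn ht
    ((mul_eq_zero.1 hz).resolve_left (Complex.exp_ne_zero _))
  rw [Complex.norm_exp, Real.exp_eq_one_iff] at h
  simpa using h

lemma CWZ_zero_ne_zero (n : ℕ) (t : ℝ) : CWZ n t 0 ≠ 0 := by
  have h : CWZ n t 0
      = ((∑ k ∈ Finset.range (n + 1), n.choose k * Real.exp (t * (2 * k - n) ^ 2) : ℝ) : ℂ) := by
    rw [CWZ_eq_sum_choose]
    simp
  rw [h]
  refine Complex.ofReal_ne_zero.2 (Finset.sum_pos (fun k hk => ?_) (by simp)).ne'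
  have := Nat.choose_pos (Nat.lt_succ_iff.1 (Finset.mem_range.1 hk))
  positivity

lemma CWZ_eq_sum_cos (n : ℕ) (t : ℝ) (z : ℂ) :
    CWZ n t z = ∑ k ∈ Finset.range (n + 1),
      ((n.choose k * Real.exp (t * (2 * k - n) ^ 2) : ℝ) : ℂ) * Complex.cos ((2 * k - n) * z) := by
  have h1 := CWZ_eq_sum_choose n t z
  have h2 := h1
  rw [← Finset.sum_flip] at h2
  have h3 : 2 * CWZ n t z = ∑ k ∈ Finset.range (n + 1),
      2 * (((n.choose k * Real.exp (t * (2 * k - n) ^ 2) : ℝ) : ℂ)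
        * Complex.cos ((2 * k - n) * z)) := by
    rw [two_mul]
    nth_rewrite 1 [h1]
    rw [h2, ← Finset.sum_add_distrib]
    refine Finset.sum_congr rfl fun k hk => ?_
    have hk' : k ≤ n := Nat.lt_succ_iff.1 (Finset.mem_range.1 hk)
    have e1 : (2 * ((n - k : ℕ) : ℝ) - n) ^ 2 = (2 * k - n) ^ 2 := by
      rw [Nat.cast_sub hk']
      ring
    rw [Nat.choose_symm hk', e1, Nat.cast_sub hk', Complex.cos]
    ring_nf
  rw [← Finset.mul_sum] at h3
  exact mul_left_cancel₀ two_ne_zero h3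

/-- The even and odd Chebyshev polynomials, written in the variable `cos (2 z)`. -/
lemma exists_cos_eq_aeval {e : ℕ} (he : e = 0 ∨ e = 1) (l : ℕ) :
    ∃ V : ℝ[X], V.natDegree ≤ l ∧ 0 < V.coeff l ∧
      ∀ z : ℂ, Complex.cos ((2 * l + e : ℕ) * z)
        = Complex.cos z ^ e * aeval (Complex.cos (2 * z)) V := by
  induction l using Nat.twoStepInduction with
  | zero =>
    refine ⟨1, by simp, by simp, fun z => ?_⟩
    rcases he with rfl | rfl <;> simp
  | one =>
    rcases he with rfl | rfl
    · exact ⟨X, by simp, by simp, fun z => by simp⟩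
    · refine ⟨C 2 * X - C 1, by compute_degree, by simp [coeff_one], fun z => ?_⟩
      have h3 := Complex.cos_three_mul z
      have h2 := Complex.cos_two_mul z
      simp only [map_sub, map_mul, aeval_C, aeval_X]
      push_cast
      norm_num
      rw [h2, h3]
      ring
  | more l ih1 ih2 =>
    obtain ⟨V, hVd, hVc, hV⟩ := ih1
    obtain ⟨W, hWd, hWc, hW⟩ := ih2
    refine ⟨C 2 * (X * W) - V, ?_, ?_, fun z => ?_⟩
    · refine (natDegree_sub_le _ _).trans (max_le ?_ (by omega))
      refine (natDegree_C_mul_le _ _).trans (natDegree_mul_le.trans ?_)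
      rw [natDegree_X]
      omega
    · rw [coeff_sub, coeff_C_mul, coeff_X_mul, coeff_eq_zero_of_natDegree_lt (by omega : _ < l + 2)]
      linarith
    · have h := Complex.cos_add_cos ((2 * (l + 2) + e : ℕ) * z) ((2 * l + e : ℕ) * z)
      have e1 : (((2 * (l + 2) + e : ℕ) : ℂ) * z + (2 * l + e : ℕ) * z) / 2
          = (2 * (l + 1) + e : ℕ) * z := by
        push_cast
        ring
      have e2 : (((2 * (l + 2) + e : ℕ) : ℂ) * z - (2 * l + e : ℕ) * z) / 2 = 2 * z := by
        push_cast
        ring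
      rw [e1, e2, hV, hW] at h
      simp only [map_sub, map_mul, aeval_C, aeval_X, Complex.coe_algebraMap, Complex.ofReal_ofNat]
      linear_combination h

lemma exists_CWZ_eq_aeval {e : ℕ} (he : e = 0 ∨ e = 1) (m : ℕ) (t : ℝ) :
    ∃ Q : ℝ[X], Q.natDegree = m ∧
      ∀ z : ℂ, CWZ (2 * m + e) t z = Complex.cos z ^ e * aeval (Complex.cos (2 * z)) Q := by
  choose V hVd hVc hV using exists_cos_eq_aeval he
  set n := 2 * m + e with hn
  let l : ℕ → ℕ := fun k => (2 * (k : ℤ) - n).natAbs / 2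
  have hl : ∀ k ≤ n, l k ≤ m := fun k hk => by
    simp only [l]
    omega
  have hcos : ∀ (k : ℕ) (z : ℂ), Complex.cos ((2 * k - n) * z)
      = Complex.cos z ^ e * aeval (Complex.cos (2 * z)) (V (l k)) := fun k z => by
    rw [← hV]
    have h : (2 * l k + e : ℕ) = (2 * (k : ℤ) - n).natAbs := by
      simp only [l]
      omega
    rw [h]
    have hcast : (2 * k - n : ℂ) = ((2 * (k : ℤ) - n : ℤ) : ℂ) := by push_cast; rfl
    rw [hcast]
    rcases Int.natAbs_eq (2 * (k : ℤ) - n) with h' | h'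
    · conv_lhs => rw [h']
      simp
    · conv_lhs => rw [h']
      simp
  let b : ℕ → ℝ := fun k => n.choose k * Real.exp (t * (2 * k - n) ^ 2)
  refine ⟨∑ k ∈ Finset.range (n + 1), C (b k) * V (l k), ?_, fun z => ?_⟩
  · refine natDegree_eq_of_le_of_coeff_ne_zero ?_ (ne_of_gt ?_)
    · refine natDegree_sum_le_of_forall_le _ _ fun k hk => ?_
      exact (natDegree_C_mul_le _ _).trans
        ((hVd _).trans (hl k (Nat.lt_succ_iff.1 (Finset.mem_range.1 hk))))
    · simp only [finsetSum_coeff, coeff_C_mul]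
      refine Finset.sum_pos' (fun k hk => mul_nonneg (by positivity) ?_)
        ⟨0, by simp, mul_pos ?_ ?_⟩
      · rcases (hl k (Nat.lt_succ_iff.1 (Finset.mem_range.1 hk))).eq_or_lt with h | h
        · exact h ▸ (hVc _).le
        · exact (coeff_eq_zero_of_natDegree_lt ((hVd _).trans_lt h)).ge
      · simp only [b, Nat.choose_zero_right]
        positivity
      · have : l 0 = m := by
          simp only [l]
          omega
        exact this ▸ hVc (l 0)
  · rw [CWZ_eq_sum_cos, map_sum, Finset.mul_sum]
    refine Finset.sum_congr rfl fun k _ => ?_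
    rw [hcos, map_mul, aeval_C, Complex.coe_algebraMap]
    ring

lemma prod_Icc_getD {M : Type*} [CommMonoid M] (L : List ℝ) (f : ℝ → M) :
    ∏ j ∈ Finset.Icc 1 L.length, f (L.getD (j - 1) 0) = (L.map f).prod := by
  rw [← Fin.prod_univ_fun_getElem, ← Finset.Ico_add_one_right_eq_Icc,
    Finset.prod_Ico_eq_prod_range]
  simp [Finset.prod_range]

lemma exists_sorted_CWZ_factorization {e : ℕ} (he : e = 0 ∨ e = 1) (m : ℕ) (hn : 2 * m + e ≠ 0)
    {t : ℝ} (ht : 0 ≤ t) :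
    ∃ x : ℕ → ℝ,
      (∀ k ∈ Finset.Icc 1 m, 0 < x k ∧ x k ≤ π / 2) ∧
      (∀ k, 1 ≤ k → k < m → x k ≤ x (k + 1)) ∧
      ∀ z : ℂ, CWZ (2 * m + e) t z
        = CWZ (2 * m + e) t 0 * Complex.cos z ^ e *
          ∏ j ∈ Finset.Icc 1 m,
            (((Real.sin (x j) ^ 2 : ℝ) : ℂ) - Complex.sin z ^ 2)
              / ((Real.sin (x j) ^ 2 : ℝ) : ℂ) := by
  obtain ⟨Q, hQd, hQ⟩ := exists_CWZ_eq_aeval he m t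
  set p : ℂ[X] := Q.map (algebraMap ℝ ℂ) with hp
  have hpQ : ∀ y, aeval y Q = p.eval y := fun y => by rw [hp, eval_map_algebraMap]
  have hZ0 : CWZ (2 * m + e) t 0 = p.eval 1 := by simp [hQ, hpQ]
  have hp1 : p.eval 1 ≠ 0 := hZ0 ▸ CWZ_zero_ne_zero _ t
  have hsp := IsAlgClosed.splits p
  have hroot : ∀ q ∈ p.roots, ∃ θ : ℝ, 0 < θ ∧ θ ≤ π / 2 ∧ q = ((Real.cos (2 * θ) : ℝ) : ℂ) := by
    intro q hq
    have hq0 : p.eval q = 0 := (mem_roots'.1 hq).2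
    obtain ⟨u, rfl⟩ := Complex.cos_surjective q
    have hz : CWZ (2 * m + e) t (u / 2) = 0 := by
      rw [hQ, hpQ, mul_div_cancel₀ u two_ne_zero, hq0, mul_zero]
    have him : u.im = 0 := by simpa using im_eq_zero_of_CWZ_eq_zero hn ht hz
    have hu : u = (u.re : ℂ) := Complex.ext rfl (by simpa using him)
    rw [hu] at hq0 ⊢
    refine ⟨Real.arccos (Real.cos u.re) / 2, ?_, ?_, ?_⟩
    · refine half_pos (Real.arccos_pos.2 (lt_of_le_of_ne (Real.cos_le_one _) fun h => hp1 ?_))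
      rwa [← Complex.ofReal_cos, h, Complex.ofReal_one] at hq0
    · linarith [Real.arccos_le_pi (Real.cos u.re)]
    · rw [mul_div_cancel₀ _ two_ne_zero,
        Real.cos_arccos (Real.neg_one_le_cos _) (Real.cos_le_one _), Complex.ofReal_cos]
  choose! θ hθ0 hθ1 hθ using hroot
  set L : List ℝ := (p.roots.map θ).sort (· ≤ ·) with hL
  have hLeq : (L : Multiset ℝ) = p.roots.map θ := Multiset.sort_eq _ _
  have hlen : L.length = m := by
    rw [hL, Multiset.length_sort, Multiset.card_map, ← hsp.natDegree_eq_card_roots, hp,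
      natDegree_map, hQd]
  have hmem : ∀ y ∈ L, 0 < y ∧ y ≤ π / 2 := fun y hy => by
    rw [← Multiset.mem_coe, hLeq, Multiset.mem_map] at hy
    obtain ⟨q, hq, rfl⟩ := hy
    exact ⟨hθ0 q hq, hθ1 q hq⟩
  refine ⟨fun k => L.getD (k - 1) 0, fun k hk => ?_, fun k hk1 hkm => ?_, fun z => ?_⟩
  · rw [Finset.mem_Icc] at hk
    have hlt : k - 1 < L.length := by omega
    simp only [List.getD_eq_getElem _ _ hlt]
    exact hmem _ (List.getElem_mem hlt)
  · have h1 : k - 1 < L.length := by omega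
    have h2 : k + 1 - 1 < L.length := by omega
    simp only [List.getD_eq_getElem _ _ h1, List.getD_eq_getElem _ _ h2]
    exact List.pairwise_iff_getElem.1 (Multiset.pairwise_sort _ _) _ _ h1 h2 (by omega)
  · have hprod := prod_Icc_getD L fun y : ℝ =>
      (((Real.sin y ^ 2 : ℝ) : ℂ) - Complex.sin z ^ 2) / ((Real.sin y ^ 2 : ℝ) : ℂ)
    rw [hlen] at hprod
    rw [hprod, ← Multiset.prod_coe, ← Multiset.map_coe, hLeq, Multiset.map_map, hZ0, hQ, hpQ]
    have hfac : (p.roots.map ((fun y : ℝ => (((Real.sin y ^ 2 : ℝ) : ℂ) - Complex.sin z ^ 2)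
        / ((Real.sin y ^ 2 : ℝ) : ℂ)) ∘ θ))
        = p.roots.map fun q => (Complex.cos (2 * z) - q) / (1 - q) := by
      refine Multiset.map_congr rfl fun q hq => ?_
      have hs : Real.sin (θ q) ≠ 0 :=
        (Real.sin_pos_of_pos_of_lt_pi (hθ0 q hq) (by linarith [hθ1 q hq, Real.pi_pos])).ne'
      have hs' : ((Real.sin (θ q) ^ 2 : ℝ) : ℂ) ≠ 0 := Complex.ofReal_ne_zero.2 (pow_ne_zero 2 hs)
      have hq1 : q = 1 - 2 * ((Real.sin (θ q) ^ 2 : ℝ) : ℂ) := by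
        have := hθ q hq
        rw [Real.cos_two_mul, Real.cos_sq'] at this
        conv_lhs => rw [this]
        push_cast
        ring
      have hz : Complex.cos (2 * z) = 1 - 2 * Complex.sin z ^ 2 := by
        rw [Complex.cos_two_mul, Complex.cos_sq']
        ring
      have hden : 1 - q = 2 * ((Real.sin (θ q) ^ 2 : ℝ) : ℂ) := by linear_combination -hq1
      have hnum : Complex.cos (2 * z) - q
          = 2 * (((Real.sin (θ q) ^ 2 : ℝ) : ℂ) - Complex.sin z ^ 2) := by
        linear_combination hz - hq1
      rw [Function.comp_apply, hden, hnum, mul_div_mul_left _ _ two_ne_zero]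
    have hev : p.eval (Complex.cos (2 * z))
        = p.eval 1 * (p.roots.map fun q => (Complex.cos (2 * z) - q) / (1 - q)).prod := by
      have h1 := hsp.eval_eq_prod_roots 1
      have hne : (p.roots.map fun q => 1 - q).prod ≠ 0 := fun h => hp1 (by rw [h1, h, mul_zero])
      rw [Multiset.prod_map_div, h1, hsp.eval_eq_prod_roots (Complex.cos (2 * z))]
      field_simp
    rw [hfac, hev]
    ring

theorem stmt14 (n : ℕ) (hn : 0 < n) (t : ℝ) (ht : 0 ≤ t) :
    (Even n → ∃ x : ℕ → ℝ,
      (∀ k ∈ Finset.Icc 1 (n / 2), 0 < x k ∧ x k ≤ π / 2) ∧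
      (∀ k, 1 ≤ k → k < n / 2 → x k ≤ x (k + 1)) ∧
      ∀ z : ℂ, CWZ n t z
        = CWZ n t 0 *
          ∏ j ∈ Finset.Icc 1 (n / 2),
            (((Real.sin (x j) ^ 2 : ℝ) : ℂ) - Complex.sin z ^ 2)
              / ((Real.sin (x j) ^ 2 : ℝ) : ℂ)) ∧
    (Odd n → ∃ x : ℕ → ℝ,
      (∀ k ∈ Finset.Icc 1 ((n - 1) / 2), 0 < x k ∧ x k ≤ π / 2) ∧
      (∀ k, 1 ≤ k → k < (n - 1) / 2 → x k ≤ x (k + 1)) ∧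
      ∀ z : ℂ, CWZ n t z
        = CWZ n t 0 * Complex.cos z *
          ∏ j ∈ Finset.Icc 1 ((n - 1) / 2),
            (((Real.sin (x j) ^ 2 : ℝ) : ℂ) - Complex.sin z ^ 2)
              / ((Real.sin (x j) ^ 2 : ℝ) : ℂ)) := by
  constructor
  · rintro ⟨m, rfl⟩
    have h2 : m + m = 2 * m + 0 := by omega
    have hm : (m + m) / 2 = m := by omega
    rw [hm, h2]
    simpa using exists_sorted_CWZ_factorization (Or.inl rfl) m (by omega) ht
  · rintro ⟨m, rfl⟩
    have hm : (2 * m + 1 - 1) / 2 = m := by omega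
    rw [hm]
    simpa using exists_sorted_CWZ_factorization (Or.inr rfl) m (by omega) ht
end

section
/- Let n be a positive integer and t > 0. If n is even, then the set {x ∈ (0,π/2) : Z_{n,t}(x) = 0} has exactly n/2 elements and Z_{n,t}(π/2) ≠ 0. If n is odd, then the set {x ∈ (0,π/2) : Z_{n,t}(x) = 0} has exactly (n−1)/2 elements and Z_{n,t}(π/2) = 0. -/
open scoped Real

open Polynomial in
/-- The Lee-Yang polynomial `∑ₖ (n choose k) q ^ (k (n - k)) X ^ k` of the complete graph. -/
noncomputable def leeYang (q : ℝ) (n : ℕ) : ℂ[X] :=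
  ∑ k ∈ Finset.range (n + 1), C ((n.choose k : ℂ) * (q : ℂ) ^ (k * (n - k))) * X ^ k

namespace leeYang

open Polynomial

theorem coeff_eq (q : ℝ) (n k : ℕ) :
    (leeYang q n).coeff k = (n.choose k : ℂ) * (q : ℂ) ^ (k * (n - k)) := by
  simp only [leeYang, finsetSum_coeff, coeff_C_mul, coeff_X_pow, mul_ite, mul_one, mul_zero,
    Finset.sum_ite_eq, Finset.mem_range]
  split_ifs with h
  · rfl
  · rw [Nat.choose_eq_zero_of_lt (by omega)]
    simp

theorem eval_eq (q : ℝ) (n : ℕ) (w : ℂ) :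
    (leeYang q n).eval w =
      ∑ k ∈ Finset.range (n + 1), (n.choose k : ℂ) * (q : ℂ) ^ (k * (n - k)) * w ^ k := by
  simp [leeYang, eval_finsetSum]

theorem eval_zero (q : ℝ) (n : ℕ) : (leeYang q n).eval 0 = 1 := by
  rw [← coeff_zero_eq_eval_zero, coeff_eq]
  simp

theorem ne_zero (q : ℝ) (n : ℕ) : leeYang q n ≠ 0 := fun h => by
  simpa [h] using eval_zero q n

theorem natDegree_eq (q : ℝ) (n : ℕ) : (leeYang q n).natDegree = n := by
  refine natDegree_eq_of_le_of_coeff_ne_zero ?_ (by simp [coeff_eq])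
  refine natDegree_le_iff_coeff_eq_zero.2 fun k hk => ?_
  rw [coeff_eq, Nat.choose_eq_zero_of_lt hk]
  simp

theorem card_roots (q : ℝ) (n : ℕ) : (leeYang q n).roots.card = n := by
  rw [← (IsAlgClosed.splits (leeYang q n)).natDegree_eq_card_roots, natDegree_eq]

theorem succ_eq {q : ℝ} (hq : q ≠ 0) (n : ℕ) :
    leeYang q (n + 1) = (leeYang q n).comp (C (q : ℂ) * X) +
      C ((q : ℂ) ^ n) * (X * (leeYang q n).comp (C (q : ℂ)⁻¹ * X)) := by
  have hq' : (q : ℂ) ≠ 0 := by exact_mod_cast hq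
  ext k
  rw [coeff_add, coeff_C_mul, comp_C_mul_X_coeff]
  cases k with
  | zero => simp [coeff_eq]
  | succ k =>
    rw [coeff_X_mul, comp_C_mul_X_coeff]
    simp only [coeff_eq]
    rcases lt_trichotomy k n with h | rfl | h
    · obtain ⟨d, rfl⟩ := Nat.exists_eq_add_of_lt h
      rw [Nat.choose_succ_succ, show k + d + 1 + 1 - (k + 1) = d + 1 by omega,
        show k + d + 1 - (k + 1) = d by omega, show k + d + 1 - k = d + 1 by omega]
      push_cast
      rw [inv_pow]
      field_simp
      ring
    · simp
      field_simp
    · rw [Nat.choose_eq_zero_of_lt h, Nat.choose_eq_zero_of_lt (show n < k + 1 by omega),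
        Nat.choose_eq_zero_of_lt (show n + 1 < k + 1 by omega)]
      simp

theorem pow_mul_eval_inv (q : ℝ) (n : ℕ) {w : ℂ} (hw : w ≠ 0) :
    w ^ n * (leeYang q n).eval w⁻¹ = (leeYang q n).eval w := by
  rw [eval_eq, eval_eq, Finset.mul_sum, ← Finset.sum_range_reflect]
  refine Finset.sum_congr rfl fun k hk => ?_
  obtain ⟨d, rfl⟩ := Nat.exists_eq_add_of_le (Nat.lt_succ_iff.1 (Finset.mem_range.1 hk))
  rw [show k + d + 1 - 1 - k = d by omega, show k + d - d = k by omega,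
    show k + d - k = d by omega, Nat.choose_symm_add, mul_comm d k, inv_pow]
  field_simp
  ring

theorem eval_conj (q : ℝ) (n : ℕ) (w : ℂ) :
    (leeYang q n).eval (starRingEnd ℂ w) = starRingEnd ℂ ((leeYang q n).eval w) := by
  simp [eval_eq]

theorem eval_one_ne_zero {q : ℝ} (hq : 0 < q) (n : ℕ) : (leeYang q n).eval 1 ≠ 0 := by
  have h : (0 : ℝ) < ∑ k ∈ Finset.range (n + 1), (n.choose k : ℝ) * q ^ (k * (n - k)) := by
    refine Finset.sum_pos (fun k hk => ?_) ⟨0, by simp⟩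
    have := Nat.choose_pos (Nat.lt_succ_iff.1 (Finset.mem_range.1 hk))
    positivity
  rw [eval_eq]
  simp only [one_pow, mul_one]
  exact_mod_cast h.ne'

/-- Moving a point of the closed disc inwards brings it no closer to the circle than moving it
outwards, in the scale-invariant sense. -/
theorem norm_mul_inv_mul_sub_le {q : ℝ} (hq : 0 < q) (hq1 : q < 1) {w r : ℂ} (hr : ‖r‖ = 1)
    (hw : ‖w‖ ≤ 1) : ‖(q : ℂ) * ((q : ℂ)⁻¹ * w - r)‖ ≤ ‖(q : ℂ) * w - r‖ := by
  have hq' : (q : ℂ) ≠ 0 := by exact_mod_cast hq.ne'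
  rw [mul_sub, mul_inv_cancel_left₀ hq']
  refine (pow_le_pow_iff_left₀ (norm_nonneg _) (norm_nonneg _) two_ne_zero).1 ?_
  have hr2 : r.re * r.re + r.im * r.im = 1 := by
    rw [← Complex.normSq_apply, Complex.normSq_eq_norm_sq, hr, one_pow]
  have hw2 : w.re * w.re + w.im * w.im ≤ 1 := by
    rw [← Complex.normSq_apply, Complex.normSq_eq_norm_sq]
    exact pow_le_one₀ (norm_nonneg _) hw
  simp only [← Complex.normSq_eq_norm_sq, Complex.normSq_apply, Complex.sub_re, Complex.sub_im,
    Complex.re_ofReal_mul, Complex.im_ofReal_mul]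
  nlinarith [mul_nonneg (show 0 ≤ 1 - q ^ 2 by nlinarith) (sub_nonneg.2 hw2)]

theorem norm_prod_le {q : ℝ} (hq : 0 < q) (hq1 : q < 1) {w : ℂ} (hw : ‖w‖ ≤ 1)
    (s : Multiset ℂ) (hs : ∀ r ∈ s, ‖r‖ = 1) :
    ‖(q : ℂ) ^ s.card * (s.map ((q : ℂ)⁻¹ * w - ·)).prod‖ ≤ ‖(s.map ((q : ℂ) * w - ·)).prod‖ := by
  induction s using Multiset.induction with
  | empty => simp
  | cons r s ih =>
    simp only [Multiset.card_cons, Multiset.map_cons, Multiset.prod_cons]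
    rw [pow_succ', mul_mul_mul_comm, norm_mul, norm_mul (_ - r)]
    exact mul_le_mul (norm_mul_inv_mul_sub_le hq hq1 (hs r (by simp)) hw)
      (ih fun r hr => hs r (by simp [hr])) (norm_nonneg _) (norm_nonneg _)

theorem re_log_deriv_factor_nonneg {q : ℝ} (hq : 0 < q) (hq1 : q < 1) {w r : ℂ} (hr : ‖r‖ = 1)
    (hw : ‖w‖ = 1) :
    0 ≤ ((q : ℂ)⁻¹ * w * (1 / ((q : ℂ)⁻¹ * w - r)) -
      (q : ℂ) * w * (1 / ((q : ℂ) * w - r))).re := by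
  have hq' : (q : ℂ) ≠ 0 := by exact_mod_cast hq.ne'
  have h1 : w - q * r ≠ 0 := fun h => by
    have := congrArg norm (sub_eq_zero.1 h)
    rw [norm_mul, hr, hw, Complex.norm_real, Real.norm_of_nonneg hq.le] at this
    linarith
  have h2 : q * w - r ≠ 0 := fun h => by
    have := congrArg norm (sub_eq_zero.1 h)
    rw [norm_mul, hr, hw, Complex.norm_real, Real.norm_of_nonneg hq.le] at this
    linarith
  have h3 : (q : ℂ)⁻¹ * w - r ≠ 0 := by
    rw [show (q : ℂ)⁻¹ * w - r = (q : ℂ)⁻¹ * (w - q * r) by field_simp]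
    exact mul_ne_zero (inv_ne_zero hq') h1
  have hww : w * starRingEnd ℂ w = 1 := by simp [Complex.mul_conj, Complex.normSq_eq_norm_sq, hw]
  have hrr : r * starRingEnd ℂ r = 1 := by simp [Complex.mul_conj, Complex.normSq_eq_norm_sq, hr]
  have key : (q : ℂ)⁻¹ * w * (1 / ((q : ℂ)⁻¹ * w - r)) - (q : ℂ) * w * (1 / ((q : ℂ) * w - r)) =
      (((1 - q ^ 2) / Complex.normSq (w - q * r) : ℝ) : ℂ) := by
    have h4 : starRingEnd ℂ (w - q * r) ≠ 0 := (_root_.map_ne_zero _).2 h1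
    have h5 : (q : ℂ) * w - r = -(r * w * starRingEnd ℂ (w - q * r)) := by
      simp only [map_sub, map_mul, Complex.conj_ofReal]
      linear_combination r * hww - q * w * hrr
    have h6 : (q : ℂ)⁻¹ * w * (1 / ((q : ℂ)⁻¹ * w - r)) = w / (w - q * r) := by
      field_simp
    have hr0 : r ≠ 0 := fun h => by simp [h] at hr
    have hw0 : w ≠ 0 := fun h => by simp [h] at hw
    rw [Complex.ofReal_div, ← Complex.mul_conj, h6]
    rw [show (1 - q ^ 2 : ℝ) / ((w - q * r) * starRingEnd ℂ (w - q * r)) =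
      (q ^ 2 - 1 : ℂ) * r * w / ((w - q * r) * (q * w - r)) by
        rw [h5]; push_cast; field_simp; ring]
    rw [mul_one_div, div_sub_div _ _ h1 h2]
    congr 1
    ring
  rw [key, Complex.ofReal_re]
  exact div_nonneg (by nlinarith) (Complex.normSq_nonneg _)

theorem re_log_deriv_nonneg {q : ℝ} (hq : 0 < q) (hq1 : q < 1) {w : ℂ} (hw : ‖w‖ = 1)
    (s : Multiset ℂ) (hs : ∀ r ∈ s, ‖r‖ = 1) :
    0 ≤ ((q : ℂ)⁻¹ * w * (s.map fun r => 1 / ((q : ℂ)⁻¹ * w - r)).sum -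
      (q : ℂ) * w * (s.map fun r => 1 / ((q : ℂ) * w - r)).sum).re := by
  induction s using Multiset.induction with
  | empty => simp
  | cons r s ih =>
    simp only [Multiset.map_cons, Multiset.sum_cons]
    rw [mul_add, mul_add, add_sub_add_comm, Complex.add_re]
    exact add_nonneg (re_log_deriv_factor_nonneg hq hq1 (hs r (by simp)) hw)
      (ih fun r hr => hs r (by simp [hr]))

theorem eval_ne_zero_of_norm_lt {q : ℝ} (hq : 0 < q) (hq1 : q < 1) {n : ℕ}
    (h : ∀ r, (leeYang q n).eval r = 0 → ‖r‖ = 1) {w : ℂ} (hw : ‖w‖ < 1) :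
    (leeYang q (n + 1)).eval w ≠ 0 := by
  intro h0
  have hA : (leeYang q n).eval (q * w) ≠ 0 := fun h1 => by
    have := h _ h1
    rw [norm_mul, Complex.norm_real, Real.norm_of_nonneg hq.le] at this
    nlinarith [norm_nonneg w]
  have hle : ‖(q : ℂ) ^ n * (leeYang q n).eval ((q : ℂ)⁻¹ * w)‖ ≤
      ‖(leeYang q n).eval (q * w)‖ := by
    have hp := norm_prod_le hq hq1 hw.le (leeYang q n).roots
      fun r hr => h r ((mem_roots (ne_zero q n)).1 hr)
    rw [card_roots] at hp
    rw [(IsAlgClosed.splits (leeYang q n)).eval_eq_prod_roots,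
      (IsAlgClosed.splits (leeYang q n)).eval_eq_prod_roots, mul_left_comm, norm_mul,
      norm_mul (leadingCoeff _)]
    exact mul_le_mul_of_nonneg_left hp (norm_nonneg _)
  rw [succ_eq hq.ne'] at h0
  simp only [eval_add, eval_mul, eval_C, eval_X, eval_comp] at h0
  have heq := congrArg norm (eq_neg_of_add_eq_zero_left h0)
  rw [norm_neg, mul_left_comm, norm_mul w] at heq
  have := norm_pos_iff.2 hA
  nlinarith [norm_nonneg w]

/-- The Lee-Yang circle theorem for the complete graph. -/
theorem norm_eq_one_of_eval_eq_zero {q : ℝ} (hq : 0 < q) (hq1 : q < 1) (n : ℕ) :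
    ∀ w, (leeYang q n).eval w = 0 → ‖w‖ = 1 := by
  induction n with
  | zero => intro w hw; simp [leeYang] at hw
  | succ n ih =>
    intro w hw
    rcases lt_trichotomy ‖w‖ 1 with h | h | h
    · exact absurd hw (eval_ne_zero_of_norm_lt hq hq1 ih h)
    · exact h
    · have hw0 : w ≠ 0 := fun h0 => by norm_num [h0] at h
      rw [← pow_mul_eval_inv q (n + 1) hw0] at hw
      refine absurd ((mul_eq_zero.1 hw).resolve_left (pow_ne_zero _ hw0))
        (eval_ne_zero_of_norm_lt hq hq1 ih ?_)
      rw [norm_inv]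
      exact inv_lt_one_of_one_lt₀ h

theorem derivative_eval_ne_zero {q : ℝ} (hq : 0 < q) (hq1 : q < 1) (n : ℕ) {w : ℂ}
    (hw : (leeYang q n).eval w = 0) : (leeYang q n).derivative.eval w ≠ 0 := by
  cases n with
  | zero => simp [leeYang] at hw
  | succ n =>
    intro hd
    have hn := norm_eq_one_of_eval_eq_zero hq hq1 (n + 1) w hw
    have hq' : (q : ℂ) ≠ 0 := by exact_mod_cast hq.ne'
    have hroots := norm_eq_one_of_eval_eq_zero hq hq1 n
    have hA : (leeYang q n).eval (q * w) ≠ 0 := fun h1 => by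
      have := hroots _ h1
      rw [norm_mul, Complex.norm_real, Real.norm_of_nonneg hq.le, hn] at this
      linarith
    have hB : (leeYang q n).eval ((q : ℂ)⁻¹ * w) ≠ 0 := fun h1 => by
      have := hroots _ h1
      rw [norm_mul, norm_inv, Complex.norm_real, Real.norm_of_nonneg hq.le, hn, mul_one,
        inv_eq_one] at this
      linarith
    have hre := re_log_deriv_nonneg hq hq1 hn (leeYang q n).roots
      fun r hr => hroots r ((mem_roots (ne_zero q n)).1 hr)
    rw [← (IsAlgClosed.splits (leeYang q n)).eval_derivative_div_eval_of_ne_zero hA,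
      ← (IsAlgClosed.splits (leeYang q n)).eval_derivative_div_eval_of_ne_zero hB] at hre
    rw [succ_eq hq.ne'] at hw hd
    simp only [derivative_add, derivative_mul, derivative_C, derivative_X, derivative_comp,
      eval_add, eval_mul, eval_C, eval_X, eval_comp, zero_mul, zero_add, one_mul, mul_one] at hw hd
    generalize (leeYang q n).eval (q * w) = a at *
    generalize (leeYang q n).eval ((q : ℂ)⁻¹ * w) = b at *
    generalize (leeYang q n).derivative.eval (q * w) = a' at *
    generalize (leeYang q n).derivative.eval ((q : ℂ)⁻¹ * w) = b' at *
    have key : (q : ℂ)⁻¹ * w * (b' / b) - (q : ℂ) * w * (a' / a) = -1 := by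
      have ha : a = -((q : ℂ) ^ n * (w * b)) := eq_neg_of_add_eq_zero_left hw
      have hc : (q : ℂ) ^ n * (w * b) ≠ 0 := fun h => hA (by rw [ha, h, neg_zero])
      have hw0 : w ≠ 0 := fun h => by simp [h] at hn
      rw [ha]
      field_simp
      field_simp at hd
      linear_combination hd
    rw [key] at hre
    norm_num at hre

theorem nodup_roots {q : ℝ} (hq : 0 < q) (hq1 : q < 1) (n : ℕ) : (leeYang q n).roots.Nodup := by
  classical
  refine Multiset.nodup_iff_count_le_one.2 fun w => ?_
  rw [count_roots]
  by_contra! h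
  obtain ⟨h1, h2⟩ := (one_lt_rootMultiplicity_iff_isRoot (ne_zero q n)).1 h
  exact derivative_eval_ne_zero hq hq1 n h1 h2

open Classical in
/-- Apart from a possible root at `-1`, half of the roots lie in the upper half plane. -/
theorem card_roots_upper {q : ℝ} (hq : 0 < q) (hq1 : q < 1) (n : ℕ) :
    2 * ((leeYang q n).roots.toFinset.filter fun w => 0 < w.im).card +
      (if (leeYang q n).eval (-1) = 0 then 1 else 0) = n := by
  set R := (leeYang q n).roots.toFinset with hR
  have mem_R (w : ℂ) : w ∈ R ↔ (leeYang q n).eval w = 0 := by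
    simp [hR, ne_zero]
  have hcard : R.card = n := by
    rw [hR, Multiset.toFinset_card_of_nodup (nodup_roots hq hq1 n), card_roots]
  have hlower : (R.filter fun w => w.im < 0).card = (R.filter fun w => 0 < w.im).card := by
    refine Finset.card_bij' (fun w _ => starRingEnd ℂ w) (fun w _ => starRingEnd ℂ w) ?_ ?_ ?_ ?_
    all_goals simp +contextual [mem_R, eval_conj]
  have hreal : (R.filter fun w => w.im = 0).card =
      if (leeYang q n).eval (-1) = 0 then 1 else 0 := by
    have hsub (w : ℂ) (hw : w ∈ R) (him : w.im = 0) : w = -1 := by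
      rw [mem_R] at hw
      have h1 := norm_eq_one_of_eval_eq_zero hq hq1 n w hw
      have hwr : w = (w.re : ℂ) := Complex.ext rfl (by simpa using him)
      rw [hwr, Complex.norm_real, Real.norm_eq_abs, abs_eq zero_le_one] at h1
      rcases h1 with h1 | h1
      · rw [hwr, h1] at hw
        exact absurd hw (by simpa using eval_one_ne_zero hq n)
      · rw [hwr, h1]
        simp
    split_ifs with h
    · rw [Finset.card_eq_one]
      refine ⟨-1, Finset.eq_singleton_iff_unique_mem.2 ⟨by simp [mem_R, h], fun w hw => ?_⟩⟩
      rw [Finset.mem_filter] at hw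
      exact hsub w hw.1 hw.2
    · rw [Finset.card_eq_zero, Finset.filter_eq_empty_iff]
      intro w hw him
      rw [hsub w hw him, mem_R] at hw
      exact h hw
  have hsplit1 := Finset.card_filter_add_card_filter_not (s := R) (fun w => 0 < w.im)
  have hsplit2 := Finset.card_filter_add_card_filter_not
    (s := R.filter fun w => ¬ 0 < w.im) (fun w => w.im < 0)
  rw [Finset.filter_filter, Finset.filter_filter] at hsplit2
  rw [Finset.filter_congr (q := fun w : ℂ => w.im < 0) (fun w _ => by
      constructor <;> intros <;> grind),
    Finset.filter_congr (p := fun w : ℂ => ¬ 0 < w.im ∧ ¬ w.im < 0) (q := fun w : ℂ => w.im = 0)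
      (fun w _ => by constructor <;> intros <;> grind)] at hsplit2
  omega

end leeYang

theorem sum_spin_s17 {n : ℕ} (σ : Fin n → Bool) :
    ∑ j, spin (σ j) = 2 * ((Finset.univ.filter fun j => σ j = true).card : ℝ) - n := by
  have h (j : Fin n) : spin (σ j) = 2 * (if σ j = true then 1 else 0) - 1 := by
    unfold spin
    split_ifs <;> norm_num
  simp only [h, Finset.sum_sub_distrib, ← Finset.mul_sum]
  simp

theorem sum_bool_fun_card {n : ℕ} (f : ℕ → ℂ) :
    ∑ σ : Fin n → Bool, f (Finset.univ.filter fun j => σ j = true).card =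
      ∑ k ∈ Finset.range (n + 1), (n.choose k : ℂ) * f k := by
  have h := Finset.sum_powerset_apply_card f (x := (Finset.univ : Finset (Fin n)))
  simp only [Finset.card_univ, Fintype.card_fin, nsmul_eq_mul] at h
  rw [← h]
  refine Finset.sum_bij' (fun σ _ => Finset.univ.filter fun j => σ j = true)
    (fun s _ j => decide (j ∈ s)) ?_ ?_ ?_ ?_ ?_ <;> simp

theorem CWZ_eq_leeYang (n : ℕ) (t x : ℝ) :
    CWZ n t x = Complex.exp (t * n ^ 2 - Complex.I * x * n) *
      (leeYang (Real.exp (-4 * t)) n).eval (Complex.exp ((2 * x : ℝ) * Complex.I)) := by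
  unfold CWZ
  simp only [sum_spin_s17]
  rw [sum_bool_fun_card fun k => Complex.exp (t * ((2 * (k : ℝ) - n : ℝ) : ℂ) ^ 2 +
    Complex.I * x * ((2 * (k : ℝ) - n : ℝ) : ℂ)), leeYang.eval_eq, Finset.mul_sum]
  refine Finset.sum_congr rfl fun k hk => ?_
  have hk' : k ≤ n := Nat.lt_succ_iff.1 (Finset.mem_range.1 hk)
  rw [mul_assoc (n.choose k : ℂ), mul_left_comm _ (n.choose k : ℂ), Complex.ofReal_exp,
    ← Complex.exp_nat_mul, ← Complex.exp_nat_mul, ← Complex.exp_add, ← Complex.exp_add]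
  congr 2
  push_cast [Nat.cast_sub hk']
  ring

theorem CWZ_eq_zero_iff (n : ℕ) (t x : ℝ) :
    CWZ n t x = 0 ↔
      (leeYang (Real.exp (-4 * t)) n).eval (Complex.exp ((2 * x : ℝ) * Complex.I)) = 0 := by
  simp [CWZ_eq_leeYang, Complex.exp_ne_zero]

theorem CWZ_pi_div_two_eq_zero_iff (n : ℕ) (t : ℝ) :
    CWZ n t ((π / 2 : ℝ) : ℂ) = 0 ↔ (leeYang (Real.exp (-4 * t)) n).eval (-1) = 0 := by
  rw [CWZ_eq_zero_iff, mul_div_cancel₀ π two_ne_zero, Complex.exp_pi_mul_I]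

open Classical in
theorem encard_CWZ_zeros (n : ℕ) {t : ℝ} (ht : 0 < t) :
    {z : ℝ | z ∈ Set.Ioo 0 (π / 2) ∧ CWZ n t z = 0}.encard =
      ((leeYang (Real.exp (-4 * t)) n).roots.toFinset.filter fun w => 0 < w.im).card := by
  have hinj : Set.InjOn (fun z : ℝ => Complex.exp ((2 * z : ℝ) * Complex.I))
      {z : ℝ | z ∈ Set.Ioo 0 (π / 2) ∧ CWZ n t z = 0} := by
    rintro x ⟨⟨hx0, hx1⟩, -⟩ y ⟨⟨hy0, hy1⟩, -⟩ hxy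
    have h := congrArg Complex.re hxy
    simp only [Complex.exp_ofReal_mul_I_re] at h
    have := Real.injOn_cos ⟨by linarith, by linarith⟩ ⟨by linarith, by linarith⟩ h
    linarith
  rw [← hinj.encard_image, ← Set.encard_coe_eq_coe_finsetCard]
  congr 1
  ext w
  simp only [Set.mem_image, Set.mem_ofPred_eq, Finset.coe_filter, Multiset.mem_toFinset,
    Polynomial.mem_roots (leeYang.ne_zero _ n), Polynomial.IsRoot.def, CWZ_eq_zero_iff]
  constructor
  · rintro ⟨x, ⟨⟨hx0, hx1⟩, hx⟩, rfl⟩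
    refine ⟨hx, ?_⟩
    rw [Complex.exp_ofReal_mul_I_im]
    exact Real.sin_pos_of_pos_of_lt_pi (by linarith) (by linarith)
  · rintro ⟨hw, him⟩
    have hn := leeYang.norm_eq_one_of_eval_eq_zero (Real.exp_pos _)
      (Real.exp_lt_one_iff.2 (by linarith)) n w hw
    have hexp : Complex.exp ((2 * (w.arg / 2) : ℝ) * Complex.I) = w := by
      have := Complex.norm_mul_exp_arg_mul_I w
      rwa [hn, Complex.ofReal_one, one_mul, ← mul_div_cancel₀ w.arg two_ne_zero] at this
    have hpos : 0 < w.arg := (Complex.arg_nonneg_iff.2 him.le).lt_of_ne fun h => by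
      have := Complex.arg_eq_zero_iff.1 h.symm
      exact him.ne' this.2
    have hlt : w.arg < π := (Complex.arg_le_pi w).lt_of_ne fun h =>
      him.ne' (Complex.arg_eq_pi_iff.1 h).2
    exact ⟨w.arg / 2, ⟨⟨by linarith, by linarith⟩, by rwa [hexp]⟩, hexp⟩

theorem stmt17 (n : ℕ) (hn : 0 < n) (t : ℝ) (ht : 0 < t) :
    (Even n →
      {z : ℝ | z ∈ Set.Ioo 0 (π / 2) ∧ CWZ n t z = 0}.encard = (n / 2 : ℕ) ∧
        CWZ n t ((π / 2 : ℝ) : ℂ) ≠ 0) ∧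
    (Odd n →
      {z : ℝ | z ∈ Set.Ioo 0 (π / 2) ∧ CWZ n t z = 0}.encard = ((n - 1) / 2 : ℕ) ∧
        CWZ n t ((π / 2 : ℝ) : ℂ) = 0) := by
  classical
  have h := leeYang.card_roots_upper (Real.exp_pos (-4 * t)) (Real.exp_lt_one_iff.2 (by linarith)) n
  rw [encard_CWZ_zeros n ht, ne_eq, CWZ_pi_div_two_eq_zero_iff, Nat.cast_inj, Nat.cast_inj]
  split_ifs at h with h1
  · exact ⟨fun ⟨m, hm⟩ => by omega, fun ⟨m, hm⟩ => ⟨by omega, h1⟩⟩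
  · exact ⟨fun ⟨m, hm⟩ => ⟨by omega, h1⟩, fun ⟨m, hm⟩ => by omega⟩
end

section
/- Let n be a positive even integer. Let x_1, …, x_{n/2} : (0,∞) → ℝ be continuous functions such that for every t > 0 one has 0 < x_1(t) < … < x_{n/2}(t) < π/2 and {x ∈ (0,π/2) : Z_{n,t}(x) = 0} = {x_1(t), …, x_{n/2}(t)}. Then each x_k is differentiable on (0,∞) and for every t > 0, x_k′(t) = 2·cot(2x_k(t)) − 2·sin(2x_k(t)) · Σ_{j=1, j≠k}^{n/2} [sin²x_j(t) − sin²x_k(t)]^{−1}. -/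
open scoped Real

open Polynomial in
/-- A nonzero polynomial with as many distinct known roots as its degree allows has simple roots,
and the ratio of its first two derivatives at a root is given by the other roots. -/
theorem derivatives_at_root_of_natDegree_le {ι : Type*} [DecidableEq ι] (s : Finset ι)
    (u : ι → ℝ) (hu : Set.InjOn u s) (P : ℝ[X]) (hP : P ≠ 0) (hdeg : P.natDegree ≤ s.card)
    (hroot : ∀ i ∈ s, P.eval (u i) = 0) {k : ι} (hk : k ∈ s) :
    (derivative P).eval (u k) ≠ 0 ∧
      (derivative (derivative P)).eval (u k) =
        2 * (derivative P).eval (u k) * ∑ j ∈ s.erase k, (u k - u j)⁻¹ := by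
  obtain ⟨R, hR⟩ : ∏ i ∈ s, (X - C (u i)) ∣ P := by
    refine Finset.prod_dvd_of_coprime (fun i hi j hj hij => ?_) fun i hi => ?_
    · exact isCoprime_X_sub_C_of_isUnit_sub
        (sub_ne_zero.2 fun h => hij (hu hi hj h)).isUnit
    · exact dvd_iff_isRoot.2 (hroot i hi)
  have hR0 : R ≠ 0 := by
    rintro rfl
    exact hP (by simpa using hR)
  have hprod : (∏ i ∈ s, (X - C (u i))).Monic := monic_prod_of_monic _ _ fun i _ => monic_X_sub_C _
  have hRdeg : R.natDegree = 0 := by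
    have h := hprod.natDegree_mul' hR0
    rw [← hR, natDegree_prod_of_monic _ _ fun i _ => monic_X_sub_C _] at h
    simp at h
    omega
  obtain ⟨c, rfl⟩ := natDegree_eq_zero.1 hRdeg
  have hc : c ≠ 0 := by
    rintro rfl
    simp at hR0
  set Q : ℝ[X] := (∏ i ∈ s.erase k, (X - C (u i))) * C c with hQ
  have hPQ : P = (X - C (u k)) * Q := by
    rw [hR, ← Finset.mul_prod_erase s _ hk, hQ, mul_assoc]
  have hne : ∀ j ∈ s.erase k, u k - u j ≠ 0 := fun j hj =>
    sub_ne_zero.2 fun h => (Finset.mem_erase.1 hj).1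
      (hu (Finset.mem_erase.1 hj).2 hk h.symm)
  have h1 : (derivative P).eval (u k) = Q.eval (u k) := by
    simp [hPQ]
  have h2 : (derivative (derivative P)).eval (u k) = 2 * (derivative Q).eval (u k) := by
    simp [hPQ]
    ring
  have hQk : Q.eval (u k) = (∏ j ∈ s.erase k, (u k - u j)) * c := by
    simp [hQ, eval_prod]
  have hQ' : (derivative Q).eval (u k) =
      Q.eval (u k) * ∑ j ∈ s.erase k, (u k - u j)⁻¹ := by
    rw [hQk, hQ, derivative_mul, derivative_prod_finset]
    simp only [derivative_C, mul_zero, add_zero, eval_mul, eval_C, eval_finsetSum, eval_prod,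
      derivative_sub, derivative_X, sub_zero, mul_one, eval_sub, eval_X]
    rw [mul_right_comm, Finset.mul_sum]
    congr 1
    refine Finset.sum_congr rfl fun j hj => ?_
    rw [← Finset.mul_prod_erase _ _ hj]
    field_simp [hne j hj]
  refine ⟨?_, ?_⟩
  · rw [h1, hQk]
    exact mul_ne_zero (Finset.prod_ne_zero_iff.2 hne) hc
  · rw [h2, h1, hQ', mul_assoc]

/-- A continuous solution of an implicit equation is differentiable wherever the partial
derivative in the unknown does not vanish. -/
theorem hasDerivAt_of_implicit_equation {f : ℝ × ℝ → ℝ} {g : ℝ → ℝ} {t a b : ℝ}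
    (hf : ContDiffAt ℝ 1 f (t, g t)) (hg : ContinuousAt g t)
    (hfg : ∀ᶠ s in nhds t, f (s, g s) = f (t, g t))
    (ha : HasDerivAt (fun s => f (s, g t)) a t)
    (hb : HasDerivAt (fun y => f (t, y)) b (g t)) (hb0 : b ≠ 0) :
    HasDerivAt g (-a / b) t := by
  have hfd := (hf.differentiableAt one_ne_zero).hasFDerivAt
  have ha' : fderiv ℝ f (t, g t) (1, 0) = a :=
    (hfd.comp_hasDerivAt t ((hasDerivAt_id t).prodMk (hasDerivAt_const t (g t)))).unique ha
  have hb' : fderiv ℝ f (t, g t) (0, 1) = b :=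
    (hfd.comp_hasDerivAt (g t)
      ((hasDerivAt_const (g t) t).prodMk (hasDerivAt_id (g t)))).unique hb
  have hinv : (fderiv ℝ f (t, g t) ∘L .inr ℝ ℝ ℝ).IsInvertible := by
    refine ⟨ContinuousLinearEquiv.unitsEquivAut ℝ (Units.mk0 b hb0), ?_⟩
    ext
    simp [hb']
  have himp := hf.eventually_apply_eq_iff_implicitFunction one_ne_zero hinv
  have htend : Filter.Tendsto (fun s => (s, g s)) (nhds t) (nhds (t, g t)) :=
    continuousAt_id.prodMk hg
  have heq : g =ᶠ[nhds t] hf.implicitFunction one_ne_zero hinv := by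
    filter_upwards [htend.eventually himp, hfg] with s hs hs'
    exact (hs.1 hs').symm
  have hdiff : DifferentiableAt ℝ g t :=
    heq.differentiableAt_iff.2
      (hf.hasStrictFDerivAt_implicitFunction one_ne_zero hinv).hasFDerivAt.differentiableAt
  have hcomp := hfd.comp_hasDerivAt t ((hasDerivAt_id t).prodMk hdiff.hasDerivAt)
  have hzero : fderiv ℝ f (t, g t) (1, deriv g t) = 0 :=
    hcomp.unique ((hasDerivAt_const t (f (t, g t))).congr_of_eventuallyEq hfg)
  have hsplit : ((1, deriv g t) : ℝ × ℝ) = (1, 0) + deriv g t • (0, 1) := by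
    simp
  rw [hsplit, map_add, map_smul, ha', hb', smul_eq_mul] at hzero
  have : -a / b = deriv g t := by
    field_simp
    linarith
  rw [this]
  exact hdiff.hasDerivAt

/-- The total magnetization of a spin configuration. -/
noncomputable def spinSum {n : ℕ} (σ : Fin n → Bool) : ℝ := ∑ j, spin (σ j)

theorem exists_spinSum_eq_two_mul {m : ℕ} (σ : Fin (m + m) → Bool) :
    ∃ k : ℤ, k.natAbs ≤ m ∧ spinSum σ = 2 * k := by
  refine ⟨((Finset.univ.filter fun j => σ j = true).card : ℤ) - m, ?_, ?_⟩
  · have := Finset.card_filter_le (Finset.univ : Finset (Fin (m + m))) fun j => σ j = true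
    rw [Finset.card_univ, Fintype.card_fin] at this
    omega
  · have h : ∀ b : Bool, spin b = 2 * (if b = true then 1 else 0) - 1 := by
      intro b
      cases b <;> norm_num [spin]
    simp only [spinSum, h, Finset.sum_sub_distrib, ← Finset.mul_sum, Finset.sum_boole]
    simp
    ring

/-- The real part of the Curie-Weiss partition function at real arguments. -/
noncomputable def realCWZ (n : ℕ) (t x : ℝ) : ℝ :=
  ∑ σ : Fin n → Bool, Real.exp (t * spinSum σ ^ 2) * Real.cos (x * spinSum σ)

theorem re_CWZ (n : ℕ) (t x : ℝ) : (CWZ n t x).re = realCWZ n t x := by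
  simp only [CWZ, realCWZ, Complex.re_sum]
  refine Finset.sum_congr rfl fun σ _ => ?_
  rw [Complex.exp_re]
  change Real.exp (((t : ℂ) * (spinSum σ : ℂ) ^ 2 + Complex.I * x * (spinSum σ : ℂ)).re) *
    Real.cos (((t : ℂ) * (spinSum σ : ℂ) ^ 2 + Complex.I * x * (spinSum σ : ℂ)).im) = _
  simp [← Complex.ofReal_pow]

theorem realCWZ_zero_pos (n : ℕ) (t : ℝ) : 0 < realCWZ n t 0 := by
  simp only [realCWZ, zero_mul, Real.cos_zero, mul_one]
  exact Finset.sum_pos (fun σ _ => Real.exp_pos _) Finset.univ_nonempty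

open Polynomial in
theorem exists_polynomial_realCWZ (m : ℕ) (t : ℝ) :
    ∃ P : ℝ[X], P.natDegree ≤ m ∧ ∀ x, realCWZ (m + m) t x = P.eval (Real.sin x ^ 2) := by
  choose k hk hS using exists_spinSum_eq_two_mul (m := m)
  refine ⟨∑ σ, C (Real.exp (t * spinSum σ ^ 2)) * (Chebyshev.T ℝ (k σ)).comp (1 - 2 * X),
    ?_, fun x => ?_⟩
  · refine natDegree_sum_le_of_forall_le _ _ fun σ _ => ?_
    refine (natDegree_C_mul_le _ _).trans ?_
    have hlin : (1 - 2 * X : ℝ[X]).natDegree ≤ 1 := by compute_degree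
    calc _ ≤ (Chebyshev.T ℝ (k σ)).natDegree * (1 - 2 * X : ℝ[X]).natDegree := natDegree_comp_le
      _ ≤ (k σ).natAbs * 1 := by
        rw [Chebyshev.natDegree_T]
        gcongr
      _ ≤ m := by simpa using hk σ
  · have hcos : 1 - 2 * Real.sin x ^ 2 = Real.cos (2 * x) := by
      rw [Real.cos_two_mul, Real.cos_sq']
      ring
    simp only [realCWZ, eval_finsetSum, eval_mul, eval_C, eval_comp, eval_sub, eval_one, eval_X,
      eval_ofNat, hcos, Chebyshev.T_real_cos]
    refine Finset.sum_congr rfl fun σ _ => ?_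
    congr 2
    rw [hS]
    ring

theorem contDiff_realCWZ (n : ℕ) : ContDiff ℝ 1 fun p : ℝ × ℝ => realCWZ n p.1 p.2 := by
  unfold realCWZ
  fun_prop

/-- The partition function satisfies the backward heat equation. -/
theorem exists_heat_equation_realCWZ (n : ℕ) (t : ℝ) :
    ∃ D H : ℝ → ℝ, (∀ x, HasDerivAt (realCWZ n t) (D x) x) ∧ (∀ x, HasDerivAt D (-H x) x) ∧
      ∀ x, HasDerivAt (fun s => realCWZ n s x) (H x) t := by
  refine ⟨fun x => ∑ σ : Fin n → Bool,
      Real.exp (t * spinSum σ ^ 2) * (-Real.sin (x * spinSum σ) * spinSum σ),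
    fun x => ∑ σ : Fin n → Bool,
      Real.exp (t * spinSum σ ^ 2) * spinSum σ ^ 2 * Real.cos (x * spinSum σ),
    fun x => ?_, fun x => ?_, fun x => ?_⟩
  · exact HasDerivAt.fun_sum fun σ _ =>
      ((hasDerivAt_mul_const (spinSum σ)).cos).const_mul _
  · rw [← Finset.sum_neg_distrib]
    refine HasDerivAt.fun_sum fun σ _ => ?_
    convert! ((((hasDerivAt_mul_const (x := x) (spinSum σ)).sin).neg.mul_const
      (spinSum σ)).const_mul (Real.exp (t * spinSum σ ^ 2))) using 1
    ring
  · exact HasDerivAt.fun_sum fun σ _ =>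
      ((hasDerivAt_mul_const (spinSum σ ^ 2)).exp).mul_const _

open Polynomial in
theorem hasDerivAt_eval_sin_sq (P : ℝ[X]) (x : ℝ) :
    HasDerivAt (fun y => P.eval (Real.sin y ^ 2))
      ((derivative P).eval (Real.sin x ^ 2) * Real.sin (2 * x)) x := by
  convert! (P.hasDerivAt (Real.sin x ^ 2)).comp x ((Real.hasDerivAt_sin x).pow 2) using 1
  rw [Real.sin_two_mul]
  simp

theorem stmt18 (n : ℕ) (hn : 0 < n) (heven : Even n)
    (x : ℕ → ℝ → ℝ)
    (hcont : ∀ k ∈ Finset.Icc 1 (n / 2), ContinuousOn (x k) (Set.Ioi 0))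
    (hzeros : ∀ t : ℝ, 0 < t →
      (∀ k ∈ Finset.Icc 1 (n / 2), 0 < x k t ∧ x k t < π / 2) ∧
      (∀ k, 1 ≤ k → k < n / 2 → x k t < x (k + 1) t) ∧
      {z : ℝ | z ∈ Set.Ioo 0 (π / 2) ∧ CWZ n t z = 0}
        = (fun k => x k t) '' Set.Icc 1 (n / 2)) :
    ∀ k ∈ Finset.Icc 1 (n / 2), ∀ t : ℝ, 0 < t →
      HasDerivAt (x k)
        (2 * Real.cot (2 * x k t)
          - 2 * Real.sin (2 * x k t) *
            ∑ j ∈ (Finset.Icc 1 (n / 2)).erase k,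
              (Real.sin (x j t) ^ 2 - Real.sin (x k t) ^ 2)⁻¹) t := by
  obtain ⟨m, rfl⟩ := heven
  have hm : (m + m) / 2 = m := by omega
  rw [hm] at hcont hzeros ⊢
  intro k hk t ht
  obtain ⟨hrange, hlt, -⟩ := hzeros t ht
  have hzero : ∀ s : ℝ, 0 < s → ∀ j ∈ Finset.Icc 1 m, realCWZ (m + m) s (x j s) = 0 := by
    intro s hs j hj
    have hmem : x j s ∈ (fun i => x i s) '' Set.Icc 1 m := ⟨j, by simpa using hj, rfl⟩
    rw [← (hzeros s hs).2.2] at hmem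
    rw [← re_CWZ, hmem.2, Complex.zero_re]
  have hmono : StrictMonoOn (fun j => x j t) (Set.Icc 1 m) :=
    strictMonoOn_of_lt_succ Set.ordConnected_Icc fun a _ ha ha' => by
      simp only [Order.succ_eq_add_one, Set.mem_Icc] at ha ha' ⊢
      exact hlt a ha.1 (by omega)
  have hu : Set.InjOn (fun j => Real.sin (x j t) ^ 2) (Finset.Icc 1 m : Finset ℕ) := by
    intro i hi j hj hij
    have hi' := hrange i hi
    have hj' := hrange j hj
    have hsi := Real.sin_pos_of_pos_of_lt_pi hi'.1 (by linarith [Real.pi_pos])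
    have hsj := Real.sin_pos_of_pos_of_lt_pi hj'.1 (by linarith [Real.pi_pos])
    have hsin : Real.sin (x i t) = Real.sin (x j t) :=
      (pow_left_inj₀ hsi.le hsj.le two_ne_zero).1 hij
    have hx : x i t = x j t :=
      Real.injOn_sin ⟨by linarith [Real.pi_pos], hi'.2.le⟩
        ⟨by linarith [Real.pi_pos], hj'.2.le⟩ hsin
    exact hmono.injOn (by simpa using hi) (by simpa using hj) hx
  obtain ⟨P, hdeg, hP⟩ := exists_polynomial_realCWZ m t
  have hP0 : P ≠ 0 := by
    rintro rfl
    have := realCWZ_zero_pos (m + m) t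
    simp [hP] at this
  obtain ⟨hP', hP''⟩ := derivatives_at_root_of_natDegree_le (Finset.Icc 1 m)
    (fun j => Real.sin (x j t) ^ 2) hu P hP0 (by simpa using hdeg)
    (fun i hi => by rw [← hP]; exact hzero t ht i hi) hk
  obtain ⟨D, H, hD, hH, hHt⟩ := exists_heat_equation_realCWZ (m + m) t
  have hDP : D = fun y => P.derivative.eval (Real.sin y ^ 2) * Real.sin (2 * y) := by
    funext y
    refine (hD y).unique ?_
    rw [show realCWZ (m + m) t = fun y => P.eval (Real.sin y ^ 2) from funext hP]
    exact hasDerivAt_eval_sin_sq P y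
  have hsin : 0 < Real.sin (2 * x k t) :=
    Real.sin_pos_of_pos_of_lt_pi (by linarith [(hrange k hk).1]) (by linarith [(hrange k hk).2])
  have hHP : -H (x k t) = P.derivative.derivative.eval (Real.sin (x k t) ^ 2) *
      Real.sin (2 * x k t) * Real.sin (2 * x k t) +
      P.derivative.eval (Real.sin (x k t) ^ 2) * (Real.cos (2 * x k t) * 2) := by
    refine (hH (x k t)).unique ?_
    rw [hDP]
    exact (hasDerivAt_eval_sin_sq P.derivative (x k t)).mul
      ((hasDerivAt_const_mul (x := x k t) (2 : ℝ)).sin)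
  have hDk : D (x k t) ≠ 0 := by
    rw [hDP]
    exact mul_ne_zero hP' hsin.ne'
  have key := hasDerivAt_of_implicit_equation (f := fun p => realCWZ (m + m) p.1 p.2) (g := x k)
    (t := t) (contDiff_realCWZ (m + m)).contDiffAt
    ((hcont k hk).continuousAt (Ioi_mem_nhds ht))
    (by
      filter_upwards [Ioi_mem_nhds ht] with s hs
      exact (hzero s hs k hk).trans (hzero t ht k hk).symm)
    (hHt (x k t)) (hD (x k t)) hDk
  convert! key using 1
  have hsum : ∑ j ∈ (Finset.Icc 1 m).erase k,
      (Real.sin (x j t) ^ 2 - Real.sin (x k t) ^ 2)⁻¹ =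
      -∑ j ∈ (Finset.Icc 1 m).erase k, (Real.sin (x k t) ^ 2 - Real.sin (x j t) ^ 2)⁻¹ := by
    rw [← Finset.sum_neg_distrib]
    exact Finset.sum_congr rfl fun j _ => by rw [← inv_neg, neg_sub]
  rw [hsum, hHP, hP'', hDP, Real.cot_eq_cos_div_sin]
  field_simp
  ring
end
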